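/- (Morris.) Let d ≥ 1, let Ω be a metrizable topological space with Borel σ-algebra, μ a Borel probability measure on Ω, and T : Ω → Ω a continuous μ-preserving map. Let L : Ω × ℕ → Matrix d d ℂ be a Borel measurable linear cocycle over T, i.e. L(ω,0) = Id and L(ω, ℓ+m) = L(T^m(ω), ℓ) · L(ω, m) for all ω ∈ Ω and ℓ, m ≥ 1. Assume ∫_Ω log⁺‖L(ω,1)‖ dμ(ω) < ∞. Then for μ-almost every ω ∈ Ω, the limit lim_{n→∞} ‖L(ω,n)‖^{1/n} exists and equals limsup_{n→∞} ρ(L(ω,n))^{1/n}. -/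

import Mathlib

open Filter Topology MeasureTheory

/-- Operator norm on `d × d` complex matrices induced by the Euclidean norm on `ℂ^d`. -/
noncomputable def opNorm {d : ℕ} (A : Matrix (Fin d) (Fin d) ℂ) : ℝ :=
  ‖Matrix.toEuclideanCLM (𝕜 := ℂ) A‖

/-- Spectral radius of a complex matrix, as a real number. -/
noncomputable def specRad {d : ℕ} (A : Matrix (Fin d) (Fin d) ℂ) : ℝ :=
  (spectralRadius ℂ A).toReal

/-!
Kingman's theorem, in multiplicative form so that vanishing norms need no separate treatment,
gives `lim ‖L(x,n)‖^{1/n} = l(x)` almost everywhere with `l` invariant under `T`. Dividing by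
`l(x)^n` where `l(x) > 0`, we may assume `l = 1`, and we must show that `ρ(L(x,n)) ≤ e^{-δn}`
cannot hold for all large `n` on a set of positive measure. If it did, a positive frequency of
visits to that set would give, for every `K`, orbits with visits at times `m₀ < ⋯ < m_K` whose gaps
are comparable to a large `t`. The matrices `L(T^{m_i} x, m_j - m_i)` multiply like transition
matrices, have norms between `e^{-o(t)}` and `e^{o(t)}`, and spectral radii at most `e^{-σt}`.
Along an ultrafilter, the scalars of size `e^{o(t)}` modulo the exponentially small ones form a
field, over which these matrices become nonzero and nilpotent while still multiplying like
transition matrices. Over a field this is impossible for large `K`: on a long subfamily the ranks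
are constant, equal to some `r > 0`, and then the `r × r` determinants pairing the row spaces with
the column spaces form a triangular array with nonzero diagonal, whose size is bounded in terms of
the dimension alone.
-/

open scoped ENNReal

section Birkhoff

variable {Ω : Type*} {T : Ω → Ω}

theorem orbit_induction {P : ℕ → Ω → Prop} (N : ℕ) (init : ∀ n ≤ N, ∀ x, P n x)
    (step : ∀ x, ∃ l, 1 ≤ l ∧ l ≤ N + 1 ∧ ∀ n, P n (T^[l] x) → P (l + n) x) (n : ℕ) (x : Ω) :
    P n x := by
  induction n using Nat.strong_induction_on generalizing x with
  | _ n ih =>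
    obtain hn | hn := le_or_gt n N
    · exact init n hn x
    · obtain ⟨l, one_le, le, hl⟩ := step x
      have := hl (n - l) (ih _ (by lia) _)
      rwa [Nat.add_sub_of_le (by lia)] at this

theorem birkhoffSum_indicator_const_le_nat_mul (C : Set Ω) (η : ℝ≥0∞) (n : ℕ) (x : Ω) :
    birkhoffSum T (C.indicator fun _ => η) n x ≤ n * η := by
  refine (Finset.sum_le_card_nsmul _ _ η fun k _ => ?_).trans_eq (by simp)
  exact Set.indicator_le_self' (by simp) _

theorem birkhoffSum_indicator_const_le_add {h : Ω → ℝ≥0∞} {η : ℝ≥0∞} {N : ℕ} {C : Set Ω}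
    (hC : ∀ x ∈ C, ∃ n : ℕ, 1 ≤ n ∧ n ≤ N ∧ n * η ≤ birkhoffSum T h n x) (n : ℕ) (x : Ω) :
    birkhoffSum T (C.indicator fun _ => η) n x ≤ birkhoffSum T h n x + N * η := by
  refine orbit_induction (T := T) (P := fun n x => birkhoffSum T (C.indicator fun _ => η) n x ≤
    birkhoffSum T h n x + N * η) N (fun n hn x => ?_) (fun x => ?_) n x
  · grw [birkhoffSum_indicator_const_le_nat_mul, hn]
    exact le_add_self
  · by_cases hx : x ∈ C
    · obtain ⟨l, one_le, le, hl⟩ := hC x hx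
      refine ⟨l, one_le, by lia, fun n hn => ?_⟩
      rw [birkhoffSum_add, birkhoffSum_add, add_assoc]
      grw [hn, birkhoffSum_indicator_const_le_nat_mul, hl]
    · refine ⟨1, le_rfl, by lia, fun n hn => ?_⟩
      rw [birkhoffSum_add, birkhoffSum_add, add_assoc]
      grw [hn]
      simp [hx]

theorem birkhoffSum_ofReal {h : Ω → ℝ} (h0 : ∀ x, 0 ≤ h x) (n : ℕ) (x : Ω) :
    birkhoffSum T (fun x => ENNReal.ofReal (h x)) n x = ENNReal.ofReal (birkhoffSum T h n x) :=
  (ENNReal.ofReal_sum_of_nonneg fun _ _ => h0 _).symm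

variable [MeasurableSpace Ω] {μ : Measure Ω}

theorem measurable_birkhoffSum {M : Type*} [AddCommMonoid M] [MeasurableSpace M]
    [MeasurableAdd₂ M] (hT : Measurable T) {h : Ω → M} (hh : Measurable h) (n : ℕ) :
    Measurable (birkhoffSum T h n) :=
  Finset.measurable_fun_sum _ fun k _ => hh.comp (hT.iterate k)

theorem lintegral_birkhoffSum (hT : MeasurePreserving T μ μ) {h : Ω → ℝ≥0∞} (hh : Measurable h)
    (n : ℕ) : ∫⁻ x, birkhoffSum T h n x ∂μ = n * ∫⁻ x, h x ∂μ := by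
  have hm (k : ℕ) : Measurable fun x => h (T^[k] x) := hh.comp (hT.measurable.iterate k)
  simp [birkhoffSum, lintegral_finsetSum _ fun k _ => hm k,
    fun k => (hT.iterate k).lintegral_comp hh]

theorem le_of_forall_nat_mul_le_add {a b c : ℝ≥0∞} (hc : c ≠ ⊤)
    (h : ∀ n : ℕ, n * a ≤ n * b + c) : a ≤ b := by
  have lim : Tendsto (fun n : ℕ => b + c / n) atTop (𝓝 (b + 0)) :=
    tendsto_const_nhds.add (ENNReal.Tendsto.const_div ENNReal.tendsto_nat_nhds_top (Or.inr hc)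
      |>.trans_eq (by simp))
  rw [add_zero] at lim
  refine ge_of_tendsto lim ?_
  filter_upwards [eventually_ne_atTop 0] with n hn
  have hn0 : (n : ℝ≥0∞) ≠ 0 := by exact_mod_cast hn
  rw [← ENNReal.mul_le_mul_iff_right hn0 (ENNReal.natCast_ne_top n), mul_add,
    ENNReal.mul_div_cancel hn0 (ENNReal.natCast_ne_top n)]
  exact h n

theorem mul_measure_le_lintegral_of_le_birkhoffSum [IsFiniteMeasure μ]
    (hT : MeasurePreserving T μ μ) {h : Ω → ℝ≥0∞} (hh : Measurable h) {η : ℝ≥0∞} (hη : η ≠ ⊤)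
    {N : ℕ} {C : Set Ω} (hCm : MeasurableSet C)
    (hC : ∀ x ∈ C, ∃ n : ℕ, 1 ≤ n ∧ n ≤ N ∧ n * η ≤ birkhoffSum T h n x) :
    η * μ C ≤ ∫⁻ x, h x ∂μ := by
  have hfin : N * η * μ Set.univ ≠ ⊤ :=
    ENNReal.mul_ne_top (ENNReal.mul_ne_top (ENNReal.natCast_ne_top N) hη) (measure_ne_top _ _)
  refine le_of_forall_nat_mul_le_add hfin fun n => ?_
  have := lintegral_mono (μ := μ) (birkhoffSum_indicator_const_le_add hC n)
  rwa [lintegral_birkhoffSum hT (measurable_const.indicator hCm),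
    lintegral_add_right _ measurable_const, lintegral_birkhoffSum hT hh,
    lintegral_indicator_const hCm, lintegral_const] at this

theorem maximal_ergodic_inequality [IsFiniteMeasure μ] (hT : MeasurePreserving T μ μ)
    {h : Ω → ℝ≥0∞} (hh : Measurable h) {η : ℝ≥0∞} (hη : η ≠ ⊤) :
    η * μ {x | ∃ n : ℕ, 1 ≤ n ∧ n * η ≤ birkhoffSum T h n x} ≤ ∫⁻ x, h x ∂μ := by
  set C : ℕ → Set Ω := fun N => {x | ∃ n : ℕ, 1 ≤ n ∧ n ≤ N ∧ n * η ≤ birkhoffSum T h n x}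
  have union_eq : {x | ∃ n : ℕ, 1 ≤ n ∧ n * η ≤ birkhoffSum T h n x} = ⋃ N, C N := by
    ext x
    simp only [Set.mem_ofPred_eq, Set.mem_iUnion, C]
    exact ⟨fun ⟨n, h1, h2⟩ => ⟨n, n, h1, le_rfl, h2⟩, fun ⟨_, n, h1, _, h2⟩ => ⟨n, h1, h2⟩⟩
  have mono : Monotone C := fun a b hab x ⟨n, h1, h2, h3⟩ => ⟨n, h1, h2.trans hab, h3⟩
  have meas (N : ℕ) : MeasurableSet (C N) := by
    have (n : ℕ) := measurableSet_le (measurable_const (a := n * η))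
      (measurable_birkhoffSum hT.measurable hh n)
    simp only [C, Set.ofPred_exists, Set.ofPred_and]
    measurability
  rw [union_eq, mono.measure_iUnion, ENNReal.mul_iSup]
  exact iSup_le fun N =>
    mul_measure_le_lintegral_of_le_birkhoffSum hT hh hη (meas N) fun x hx => hx

theorem ae_exists_forall_birkhoffSum_le [IsFiniteMeasure μ] (hT : MeasurePreserving T μ μ)
    {h : ℕ → Ω → ℝ} (hm : ∀ i, Measurable (h i)) (h0 : ∀ i x, 0 ≤ h i x)
    {η : ℕ → ℝ} (hη : ∀ i, 0 < η i)
    (lim : Tendsto (fun i => (∫⁻ x, ENNReal.ofReal (h i x) ∂μ) / ENNReal.ofReal (η i))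
      atTop (𝓝 0)) :
    ∀ᵐ x ∂μ, ∃ i, ∀ n : ℕ, 1 ≤ n → birkhoffSum T (h i) n x ≤ n * η i := by
  set D : ℕ → Set Ω := fun i => {x | ∃ n : ℕ, 1 ≤ n ∧
    n * ENNReal.ofReal (η i) ≤ birkhoffSum T (fun x => ENNReal.ofReal (h i x)) n x}
  have measure_le (i : ℕ) :
      μ (D i) ≤ (∫⁻ x, ENNReal.ofReal (h i x) ∂μ) / ENNReal.ofReal (η i) := by
    rw [ENNReal.le_div_iff_mul_le (by simp [hη i]) (by simp), mul_comm]
    exact maximal_ergodic_inequality hT (hm i).ennreal_ofReal ENNReal.ofReal_ne_top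
  have null : μ (⋂ i, D i) = 0 := nonpos_iff_eq_zero.1 <| ge_of_tendsto' lim fun i =>
    (measure_mono (Set.iInter_subset D i)).trans (measure_le i)
  filter_upwards [measure_eq_zero_iff_ae_notMem.1 null] with x hx
  obtain ⟨i, hi⟩ := not_forall.1 (mt Set.mem_iInter.2 hx)
  refine ⟨i, fun n hn => le_of_not_ge fun hlt => hi ⟨n, hn, ?_⟩⟩
  rw [birkhoffSum_ofReal (h0 i), ← ENNReal.ofReal_natCast, ← ENNReal.ofReal_mul (by positivity)]
  exact ENNReal.ofReal_le_ofReal hlt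

theorem ae_exists_forall_birkhoffSum_le_mul [IsFiniteMeasure μ] (hT : MeasurePreserving T μ μ)
    {h : Ω → ℝ} (hm : Measurable h) (h0 : ∀ x, 0 ≤ h x)
    (hint : ∫⁻ x, ENNReal.ofReal (h x) ∂μ ≠ ⊤) :
    ∀ᵐ x ∂μ, ∃ η : ℝ, ∀ n : ℕ, 1 ≤ n → birkhoffSum T h n x ≤ n * η := by
  have lim : Tendsto (fun i : ℕ => (∫⁻ x, ENNReal.ofReal (h x) ∂μ) / ENNReal.ofReal (i + 1))
      atTop (𝓝 0) := by
    have : Tendsto (fun i : ℕ => ENNReal.ofReal (i + 1)) atTop (𝓝 ⊤) :=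
      ENNReal.tendsto_ofReal_nhds_top.2
        (tendsto_natCast_atTop_atTop.atTop_add tendsto_const_nhds)
    simpa using ENNReal.Tendsto.const_div this (Or.inr hint)
  filter_upwards [ae_exists_forall_birkhoffSum_le hT (fun _ => hm) (fun _ => h0)
    (fun i : ℕ => i.cast_add_one_pos) lim] with x ⟨i, hi⟩
  exact ⟨i + 1, hi⟩

theorem ae_exists_forall_birkhoffSum_indicator_le [IsFiniteMeasure μ]
    (hT : MeasurePreserving T μ μ) {B : ℕ → Set Ω} (hBm : ∀ N, MeasurableSet (B N))
    (hB : Tendsto (fun N => μ (B N)) atTop (𝓝 0)) {η : ℝ} (hη : 0 < η) :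
    ∀ᵐ x ∂μ, ∃ N, ∀ n : ℕ, 1 ≤ n → birkhoffSum T ((B N).indicator (1 : Ω → ℝ)) n x ≤ n * η := by
  have lintegral_eq (N : ℕ) :
      ∫⁻ x, ENNReal.ofReal ((B N).indicator (1 : Ω → ℝ) x) ∂μ = μ (B N) := by
    rw [← lintegral_indicator_one (hBm N)]
    congr with x
    by_cases hx : x ∈ B N <;> simp [hx]
  refine ae_exists_forall_birkhoffSum_le hT (fun N => measurable_one.indicator (hBm N))
    (fun N => Set.indicator_nonneg (by simp)) (fun _ => hη) ?_
  simp only [lintegral_eq]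
  simpa using ENNReal.Tendsto.div_const hB (Or.inr (by simpa using hη))

end Birkhoff

section Invariant

variable {Ω : Type*} [MeasurableSpace Ω] {μ : Measure Ω} [IsFiniteMeasure μ] {T : Ω → Ω}

theorem comp_ae_eq_of_ae_le_comp (hT : MeasurePreserving T μ μ) {f : Ω → ℝ} (hf : Measurable f)
    (hle : f ≤ᵐ[μ] f ∘ T) : f ∘ T =ᵐ[μ] f := by
  have arctan_int : Integrable (fun x => Real.arctan (f x)) μ := by
    refine .of_bound (Real.measurable_arctan.comp hf).aestronglyMeasurable (Real.pi / 2) ?_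
    exact ae_of_all _ fun x => abs_le.2
      ⟨(Real.neg_pi_div_two_lt_arctan _).le, (Real.arctan_lt_pi_div_two _).le⟩
  have arctan_le : (fun x => Real.arctan (f x)) ≤ᵐ[μ] fun x => Real.arctan (f (T x)) :=
    hle.mono fun x hx => Real.arctan_mono hx
  have integral_eq : ∫ x, Real.arctan (f x) ∂μ = ∫ x, Real.arctan (f (T x)) ∂μ := by
    nth_rw 1 [← hT.map_eq]
    exact integral_map hT.aemeasurable (hT.map_eq.symm ▸ arctan_int.aestronglyMeasurable)
  have arctan_eq := (integral_eq_iff_of_ae_le arctan_int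
    (hT.integrable_comp_of_integrable arctan_int) arctan_le).1 integral_eq
  exact arctan_eq.mono fun x hx => (Real.arctan_injective hx).symm

theorem exists_invariant_ae_eq_of_ae_le_comp (hT : MeasurePreserving T μ μ) {f : Ω → ℝ}
    (hf : Measurable f) (hle : f ≤ᵐ[μ] f ∘ T) :
    ∃ g : Ω → ℝ, Measurable g ∧ g ∘ T = g ∧ g =ᵐ[μ] f := by
  refine ⟨fun x => limsup (fun k => f (T^[k] x)) atTop,
    .limsup fun k => hf.comp (hT.measurable.iterate k),
    funext fun x => limsup_nat_add (fun k => f (T^[k] x)) 1, ?_⟩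
  have iterate_eq : ∀ᵐ x ∂μ, ∀ k, f (T^[k + 1] x) = f (T^[k] x) := ae_all_iff.2 fun k => by
    simpa only [Function.iterate_succ_apply', Function.comp_apply] using
      (hT.iterate k).quasiMeasurePreserving.ae (comp_ae_eq_of_ae_le_comp hT hf hle)
  filter_upwards [iterate_eq] with x hx
  have (k : ℕ) : f (T^[k] x) = f x := by
    induction k with
    | zero => rfl
    | succ k ih => rw [hx, ih]
  simp [this]

end Invariant

section Kingman

variable {Ω : Type*}

/-- A nonnegative submultiplicative cocycle over `T`: the exponential of a subadditive process,
allowed to vanish. -/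
structure IsSubmultiplicativeCocycle (T : Ω → Ω) (w : ℕ → Ω → ℝ) : Prop where
  nonneg : ∀ n x, 0 ≤ w n x
  zero_le : ∀ x, w 0 x ≤ 1
  add_le : ∀ m n x, w (m + n) x ≤ w m x * w n (T^[m] x)

namespace IsSubmultiplicativeCocycle

variable {T : Ω → Ω} {w : ℕ → Ω → ℝ}

theorem mul_rpow_le_pow_add (hw : IsSubmultiplicativeCocycle T w) {c a b : ℝ} (hc : 0 < c)
    {l n : ℕ} {x : Ω} (hl : w l x * c ^ a ≤ c ^ l) (hn : w n (T^[l] x) * c ^ b ≤ c ^ n) :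
    w (l + n) x * c ^ (a + b) ≤ c ^ (l + n) := by
  calc w (l + n) x * c ^ (a + b)
    _ ≤ w l x * w n (T^[l] x) * c ^ (a + b) := by gcongr; exact hw.add_le l n x
    _ = w l x * c ^ a * (w n (T^[l] x) * c ^ b) := by rw [Real.rpow_add hc]; ring
    _ ≤ c ^ l * c ^ n := by
      gcongr
      exact mul_nonneg (hw.nonneg _ _) (by positivity)
    _ = c ^ (l + n) := (pow_add _ _ _).symm

theorem mul_rpow_le (hw : IsSubmultiplicativeCocycle T w) (hw1 : ∀ n x, w n x ≤ 1)
    {c : Ω → ℝ} (hcT : c ∘ T = c) (hc0 : ∀ x, 0 < c x)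
    (hc1 : ∀ x, c x ≤ 1) {N : ℕ} {B : Set Ω}
    (hB : ∀ x ∉ B, ∃ n : ℕ, 1 ≤ n ∧ n ≤ N ∧ w n x ≤ c x ^ n) (n : ℕ) (x : Ω) :
    w n x * c x ^ (N + birkhoffSum T (B.indicator 1) n x : ℝ) ≤ c x ^ n := by
  have sum_nonneg (n : ℕ) (x : Ω) : 0 ≤ birkhoffSum T (B.indicator (1 : Ω → ℝ)) n x :=
    Finset.sum_nonneg fun k _ => Set.indicator_nonneg (by simp) _
  have hcT' (l : ℕ) (x : Ω) : c (T^[l] x) = c x :=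
    congrFun (Function.iterate_invariant hcT l) x
  refine orbit_induction (T := T) (P := fun n x => w n x *
    c x ^ (N + birkhoffSum T (B.indicator 1) n x : ℝ) ≤ c x ^ n) N (fun n hn x => ?_)
    (fun x => ?_) n x
  · have : c x ^ (N + birkhoffSum T (B.indicator 1) n x : ℝ) ≤ c x ^ (n : ℝ) :=
      Real.rpow_le_rpow_of_exponent_ge (hc0 x) (hc1 x)
        (le_add_of_le_of_nonneg (by exact_mod_cast hn) (sum_nonneg n x))
    rw [Real.rpow_natCast] at this
    exact (mul_le_of_le_one_left (by have := hc0 x; positivity) (hw1 n x)).trans this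
  · obtain ⟨l, one_le, le, hl⟩ : ∃ l : ℕ, 1 ≤ l ∧ l ≤ N + 1 ∧
        w l x * c x ^ birkhoffSum T (B.indicator (1 : Ω → ℝ)) l x ≤ c x ^ l := by
      by_cases hx : x ∈ B
      · exact ⟨1, le_rfl, by lia,
          by simpa [hx] using mul_le_of_le_one_left (hc0 x).le (hw1 1 x)⟩
      · obtain ⟨l, one_le, le, hl⟩ := hB x hx
        refine ⟨l, one_le, by lia, (mul_le_of_le_one_right (hw.nonneg l x) ?_).trans hl⟩
        exact Real.rpow_le_one (hc0 x).le (hc1 x) (sum_nonneg l x)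
    refine ⟨l, one_le, le, fun n hn => ?_⟩
    rw [hcT' l x] at hn
    rw [birkhoffSum_add, add_left_comm]
    exact hw.mul_rpow_le_pow_add (hc0 x) hl hn

theorem rpow_one_div_le_of_mul_rpow_le {n : ℕ} (hn : 1 ≤ n) {u c a b : ℝ} (hu : 0 ≤ u)
    (hc0 : 0 < c) (hc1 : c ≤ 1) (hab : a ≤ b) (h : u * c ^ a ≤ c ^ n) :
    u ^ (1 / (n : ℝ)) ≤ c ^ (1 - b / n) := by
  have : (0 : ℝ) < n := by exact_mod_cast hn
  have le : u ≤ c ^ (n - b) := by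
    rw [Real.rpow_sub hc0, le_div_iff₀ (by positivity), Real.rpow_natCast]
    exact (mul_le_mul_of_nonneg_left
      (Real.rpow_le_rpow_of_exponent_ge hc0 hc1 hab) hu).trans h
  calc u ^ (1 / (n : ℝ)) ≤ (c ^ (n - b)) ^ (1 / (n : ℝ)) := by gcongr
    _ = c ^ (1 - b / n) := by
      rw [← Real.rpow_mul hc0.le]
      congr 1
      field_simp

theorem rpow_one_div_mem_Icc (hw : IsSubmultiplicativeCocycle T w) (hw1 : ∀ n x, w n x ≤ 1)
    (n : ℕ) (x : Ω) : w n x ^ (1 / (n : ℝ)) ∈ Set.Icc 0 1 :=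
  ⟨Real.rpow_nonneg (hw.nonneg n x) _, Real.rpow_le_one (hw.nonneg n x) (hw1 n x) (by positivity)⟩

theorem isBoundedUnder_le_rpow (hw : IsSubmultiplicativeCocycle T w) (hw1 : ∀ n x, w n x ≤ 1)
    (x : Ω) : IsBoundedUnder (· ≤ ·) atTop fun n => w n x ^ (1 / (n : ℝ)) :=
  isBoundedUnder_of ⟨1, fun n => (hw.rpow_one_div_mem_Icc hw1 n x).2⟩

theorem isBoundedUnder_ge_rpow (hw : IsSubmultiplicativeCocycle T w) (x : Ω) :
    IsBoundedUnder (· ≥ ·) atTop fun n => w n x ^ (1 / (n : ℝ)) :=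
  isBoundedUnder_of ⟨0, fun n => Real.rpow_nonneg (hw.nonneg n x) _⟩

theorem liminf_le_liminf_comp (hw : IsSubmultiplicativeCocycle T w) (hw1 : ∀ n x, w n x ≤ 1)
    (x : Ω) : liminf (fun n => w n x ^ (1 / (n : ℝ))) atTop ≤
      liminf (fun n => w n (T x) ^ (1 / (n : ℝ))) atTop := by
  refine le_of_forall_gt_imp_ge_of_dense fun b hb => ?_
  obtain ⟨a, ha, hab⟩ := exists_between hb
  have a_pos : 0 < a := ha.trans_le' <| le_liminf_of_le
    (hw.isBoundedUnder_le_rpow hw1 (T x)).isCoboundedUnder_ge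
    (.of_forall fun n => (hw.rpow_one_div_mem_Icc hw1 n (T x)).1)
  have freq : ∃ᶠ n in atTop, w n (T x) ^ (1 / (n : ℝ)) < a :=
    frequently_lt_of_liminf_lt (hw.isBoundedUnder_le_rpow hw1 (T x)).isCoboundedUnder_ge ha
  have lim : Tendsto (fun n : ℕ => a ^ ((n : ℝ) / (n + 1))) atTop (𝓝 (a ^ (1 : ℝ))) :=
    tendsto_const_nhds.rpow (tendsto_natCast_div_add_atTop (1 : ℝ)) (Or.inl a_pos.ne')
  rw [Real.rpow_one] at lim
  rw [← liminf_nat_add _ 1]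
  refine liminf_le_of_frequently_le ((freq.and_eventually
    ((lim.eventually_lt_const hab).and (eventually_gt_atTop 0))).mono ?_)
    ((tendsto_add_atTop_nat 1).isBoundedUnder_comp (hw.isBoundedUnder_ge_rpow x))
  rintro n ⟨root_lt, lt_b, n_pos⟩
  have w_le : w (n + 1) x ≤ a ^ (n : ℝ) := by
    rw [one_div] at root_lt
    rw [add_comm]
    calc w (1 + n) x ≤ w 1 x * w n (T x) := hw.add_le 1 n x
      _ ≤ w n (T x) := mul_le_of_le_one_left (hw.nonneg _ _) (hw1 1 x)
      _ ≤ a ^ (n : ℝ) := (Real.rpow_inv_le_iff_of_pos (hw.nonneg _ _) a_pos.le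
        (by exact_mod_cast n_pos)).1 root_lt.le
  calc w (n + 1) x ^ (1 / ((n + 1 : ℕ) : ℝ))
    _ ≤ (a ^ (n : ℝ)) ^ (1 / ((n + 1 : ℕ) : ℝ)) :=
      Real.rpow_le_rpow (hw.nonneg _ _) w_le (by positivity)
    _ = a ^ ((n : ℝ) / (n + 1)) := by
      rw [← Real.rpow_mul a_pos.le, mul_one_div, Nat.cast_succ]
    _ ≤ b := lt_b.le

theorem exists_le_pow_of_liminf_lt (hw : IsSubmultiplicativeCocycle T w)
    (hw1 : ∀ n x, w n x ≤ 1) {x : Ω} {c : ℝ}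
    (hc : liminf (fun n => w n x ^ (1 / (n : ℝ))) atTop < c) : ∃ n, 1 ≤ n ∧ w n x ≤ c ^ n := by
  obtain ⟨n, root_lt, n_pos⟩ := ((frequently_lt_of_liminf_lt
    (hw.isBoundedUnder_le_rpow hw1 x).isCoboundedUnder_ge hc).and_eventually
      (eventually_gt_atTop 0)).exists
  have hc0 : 0 ≤ c := (hw.rpow_one_div_mem_Icc hw1 n x).1.trans root_lt.le
  rw [one_div] at root_lt
  refine ⟨n, n_pos, ?_⟩
  rw [← Real.rpow_natCast]
  exact (Real.rpow_inv_le_iff_of_pos (hw.nonneg n x) hc0 (by exact_mod_cast n_pos)).1 root_lt.le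

theorem mul (hw : IsSubmultiplicativeCocycle T w) {v : ℕ → Ω → ℝ}
    (hv : IsSubmultiplicativeCocycle T v) :
    IsSubmultiplicativeCocycle T fun n x => w n x * v n x where
  nonneg n x := mul_nonneg (hw.nonneg n x) (hv.nonneg n x)
  zero_le x := mul_le_one₀ (hw.zero_le x) (hv.nonneg 0 x) (hv.zero_le x)
  add_le m n x := calc
    w (m + n) x * v (m + n) x ≤ w m x * w n (T^[m] x) * (v m x * v n (T^[m] x)) :=
      mul_le_mul (hw.add_le m n x) (hv.add_le m n x) (hv.nonneg _ _)
        (mul_nonneg (hw.nonneg _ _) (hw.nonneg _ _))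
    _ = w m x * v m x * (w n (T^[m] x) * v n (T^[m] x)) := mul_mul_mul_comm _ _ _ _

theorem exp_neg_birkhoffSum (h : Ω → ℝ) :
    IsSubmultiplicativeCocycle T fun n x => Real.exp (-birkhoffSum T h n x) where
  nonneg _ _ := (Real.exp_pos _).le
  zero_le x := by simp
  add_le m n x := by rw [birkhoffSum_add, neg_add, Real.exp_add]

theorem pos_of_tendsto_exp_neg_birkhoffSum {h : Ω → ℝ} {x : Ω} {a η : ℝ}
    (hη : ∀ n : ℕ, 1 ≤ n → birkhoffSum T h n x ≤ n * η)
    (ha : Tendsto (fun n => Real.exp (-birkhoffSum T h n x) ^ (1 / (n : ℝ))) atTop (𝓝 a)) :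
    0 < a := by
  refine (Real.exp_pos (-η)).trans_le (ge_of_tendsto ha ?_)
  filter_upwards [eventually_ge_atTop 1] with n hn
  have hn0 : (0 : ℝ) < n := by exact_mod_cast hn
  rw [← Real.exp_mul, Real.exp_le_exp, mul_one_div, le_div_iff₀ hn0]
  linarith [hη n hn]

theorem le_exp_birkhoffSum_posLog (hw : IsSubmultiplicativeCocycle T w) (n : ℕ) (x : Ω) :
    w n x ≤ Real.exp (birkhoffSum T (fun y => Real.posLog (w 1 y)) n x) := by
  induction n with
  | zero => simpa using hw.zero_le x
  | succ n ih =>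
    rw [birkhoffSum_succ, Real.exp_add]
    refine (hw.add_le n 1 x).trans (mul_le_mul ih ?_ (hw.nonneg _ _) (Real.exp_pos _).le)
    exact Real.le_exp_log _ |>.trans (Real.exp_le_exp.2 (le_max_right _ _))

variable [MeasurableSpace Ω] {μ : Measure Ω} [IsFiniteMeasure μ]

theorem ae_limsup_le_rpow (hw : IsSubmultiplicativeCocycle T w) (hw1 : ∀ n x, w n x ≤ 1)
    (hT : MeasurePreserving T μ μ) (hwm : ∀ n, Measurable (w n)) {c : Ω → ℝ} (hcm : Measurable c)
    (hcT : c ∘ T = c) (hc0 : ∀ x, 0 < c x) (hc1 : ∀ x, c x ≤ 1)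
    (hc : ∀ᵐ x ∂μ, ∃ n, 1 ≤ n ∧ w n x ≤ c x ^ n) {η : ℝ} (hη : 0 < η) :
    ∀ᵐ x ∂μ, limsup (fun n => w n x ^ (1 / (n : ℝ))) atTop ≤ c x ^ (1 - η) := by
  set B : ℕ → Set Ω := fun N => {x | ∀ n, 1 ≤ n → n ≤ N → c x ^ n < w n x}
  have meas (N : ℕ) : MeasurableSet (B N) := by
    have (n : ℕ) := measurableSet_lt (hcm.pow_const n) (hwm n)
    simp only [B, Set.ofPred_forall]
    measurability
  have anti : Antitone B := fun M N hMN x hx n h1 h2 => hx n h1 (h2.trans hMN)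
  have measure_lim : Tendsto (fun N => μ (B N)) atTop (𝓝 0) := by
    have null : μ (⋂ N, B N) = 0 := by
      refine measure_eq_zero_iff_ae_notMem.2 (hc.mono fun x ⟨n, one_le, le⟩ hx => ?_)
      exact le.not_gt (Set.mem_iInter.1 hx n n one_le le_rfl)
    rw [← null]
    exact tendsto_measure_iInter_atTop (fun N => (meas N).nullMeasurableSet) anti
      ⟨0, measure_ne_top _ _⟩
  filter_upwards [ae_exists_forall_birkhoffSum_indicator_le hT meas measure_lim hη]
    with x ⟨N, hN⟩
  have lim : Tendsto (fun n : ℕ => c x ^ (1 - (N + n * η) / n)) atTop (𝓝 (c x ^ (1 - η))) := by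
    refine tendsto_const_nhds.rpow ?_ (Or.inl (hc0 x).ne')
    have := (tendsto_const_div_atTop_nhds_zero_nat (N : ℝ)).const_sub (1 - η)
    rw [sub_zero] at this
    refine this.congr' ?_
    filter_upwards [eventually_ne_atTop 0] with n hn
    field_simp
    ring
  rw [← lim.limsup_eq]
  refine limsup_le_limsup ?_ (hw.isBoundedUnder_ge_rpow x).isCoboundedUnder_le
    lim.isBoundedUnder_le
  filter_upwards [eventually_ge_atTop 1] with n hn
  refine rpow_one_div_le_of_mul_rpow_le hn (hw.nonneg n x) (hc0 x) (hc1 x)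
    (add_le_add_right (hN n hn) _) (hw.mul_rpow_le hw1 hcT hc0 hc1 (fun y hy => ?_) n x)
  simpa [B] using hy

theorem ae_limsup_le (hw : IsSubmultiplicativeCocycle T w) (hw1 : ∀ n x, w n x ≤ 1)
    (hT : MeasurePreserving T μ μ) (hwm : ∀ n, Measurable (w n)) {c : Ω → ℝ} (hcm : Measurable c)
    (hcT : c ∘ T = c) (hc0 : ∀ x, 0 < c x) (hc1 : ∀ x, c x ≤ 1)
    (hc : ∀ᵐ x ∂μ, ∃ n, 1 ≤ n ∧ w n x ≤ c x ^ n) :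
    ∀ᵐ x ∂μ, limsup (fun n => w n x ^ (1 / (n : ℝ))) atTop ≤ c x := by
  filter_upwards [ae_all_iff.2 fun p : ℕ => hw.ae_limsup_le_rpow hw1 hT hwm hcm hcT hc0 hc1 hc
    (Nat.one_div_pos_of_nat (n := p))] with x hx
  have lim : Tendsto (fun p : ℕ => c x ^ (1 - 1 / ((p : ℝ) + 1))) atTop (𝓝 (c x ^ (1 - 0 : ℝ))) :=
    tendsto_const_nhds.rpow (tendsto_const_nhds.sub tendsto_one_div_add_atTop_nhds_zero_nat)
      (Or.inl (hc0 x).ne')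
  simpa using ge_of_tendsto' lim hx

theorem exists_tendsto_of_le_one (hw : IsSubmultiplicativeCocycle T w) (hw1 : ∀ n x, w n x ≤ 1)
    (hT : MeasurePreserving T μ μ) (hwm : ∀ n, Measurable (w n)) :
    ∃ l : Ω → ℝ, Measurable l ∧ l ∘ T = l ∧
      ∀ᵐ x ∂μ, Tendsto (fun n => w n x ^ (1 / (n : ℝ))) atTop (𝓝 (l x)) := by
  obtain ⟨l, lm, lT, l_ae⟩ := exists_invariant_ae_eq_of_ae_le_comp hT
    (.liminf fun n => (hwm n).pow_const (1 / (n : ℝ))) (ae_of_all μ (hw.liminf_le_liminf_comp hw1))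
  refine ⟨l, lm, lT, ?_⟩
  have limsup_le (p : ℕ) : ∀ᵐ x ∂μ, limsup (fun n => w n x ^ (1 / (n : ℝ))) atTop ≤
      min (|l x| + 1 / (p + 1)) 1 := by
    refine hw.ae_limsup_le hw1 hT hwm ((lm.abs.add_const _).min measurable_const)
      (funext fun x => ?_) (fun x => by positivity) (fun x => min_le_right _ _) ?_
    · simp only [Function.comp_apply, show l (T x) = l x from congrFun lT x]
    · filter_upwards [l_ae] with x hx
      obtain h | h := min_choice (|l x| + 1 / (p + 1)) 1 <;> rw [h]
      · refine hw.exists_le_pow_of_liminf_lt hw1 ?_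
        rw [← hx]
        exact lt_add_of_le_of_pos (le_abs_self _) Nat.one_div_pos_of_nat
      · exact ⟨1, le_rfl, by simpa using hw1 1 x⟩
  filter_upwards [l_ae, ae_all_iff.2 limsup_le] with x hx hsup
  have l_nonneg : 0 ≤ l x := hx ▸ le_liminf_of_le
    (hw.isBoundedUnder_le_rpow hw1 x).isCoboundedUnder_ge
    (.of_forall fun n => (hw.rpow_one_div_mem_Icc hw1 n x).1)
  rw [abs_of_nonneg l_nonneg] at hsup
  refine tendsto_of_le_liminf_of_limsup_le hx.le ?_ (hw.isBoundedUnder_le_rpow hw1 x)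
    (hw.isBoundedUnder_ge_rpow x)
  have lim : Tendsto (fun p : ℕ => l x + 1 / ((p : ℝ) + 1)) atTop (𝓝 (l x + 0)) :=
    tendsto_const_nhds.add tendsto_one_div_add_atTop_nhds_zero_nat
  simpa using ge_of_tendsto' lim fun p => (hsup p).trans (min_le_left _ _)

theorem exists_tendsto (hw : IsSubmultiplicativeCocycle T w) (hT : MeasurePreserving T μ μ)
    (hwm : ∀ n, Measurable (w n)) (hint : ∫⁻ x, ENNReal.ofReal (Real.posLog (w 1 x)) ∂μ ≠ ⊤) :
    ∃ l : Ω → ℝ, Measurable l ∧ l ∘ T = l ∧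
      ∀ᵐ x ∂μ, Tendsto (fun n => w n x ^ (1 / (n : ℝ))) atTop (𝓝 (l x)) := by
  set h : Ω → ℝ := fun x => Real.posLog (w 1 x)
  have hm : Measurable h := measurable_const.max (Real.measurable_log.comp (hwm 1))
  have exp_meas (n : ℕ) : Measurable fun x => Real.exp (-birkhoffSum T h n x) :=
    (measurable_birkhoffSum hT.measurable hm n).neg.exp
  have exp_cocycle := exp_neg_birkhoffSum (T := T) h
  have exp_le_one (n : ℕ) (x : Ω) : Real.exp (-birkhoffSum T h n x) ≤ 1 :=
    Real.exp_le_one_iff.2 (neg_nonpos.2 (Finset.sum_nonneg fun _ _ => Real.posLog_nonneg))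
  have mul_exp_le_one (n : ℕ) (x : Ω) : w n x * Real.exp (-birkhoffSum T h n x) ≤ 1 := by
    rw [Real.exp_neg, mul_inv_le_iff₀ (Real.exp_pos _), one_mul]
    exact hw.le_exp_birkhoffSum_posLog n x
  obtain ⟨a, am, aT, ha⟩ := exp_cocycle.exists_tendsto_of_le_one exp_le_one hT exp_meas
  obtain ⟨b, bm, bT, hb⟩ := (hw.mul exp_cocycle).exists_tendsto_of_le_one mul_exp_le_one hT
    fun n => (hwm n).mul (exp_meas n)
  refine ⟨b / a, bm.div am, by rw [Pi.div_comp, aT, bT], ?_⟩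
  filter_upwards [ha, hb, ae_exists_forall_birkhoffSum_le_mul hT hm
    (fun _ => Real.posLog_nonneg) hint] with x hax hbx ⟨η, hη⟩
  refine (hbx.div hax (pos_of_tendsto_exp_neg_birkhoffSum hη hax).ne').congr fun n => ?_
  rw [Pi.div_apply, Real.mul_rpow (hw.nonneg n x) (Real.exp_pos _).le]
  exact mul_div_cancel_right₀ _ (by positivity)

end IsSubmultiplicativeCocycle

end Kingman

section Visits

theorem exists_spaced_of_mul_lt_count {p : ℕ → Prop} [DecidablePred p] {K g n : ℕ}
    (h : K * g < Nat.count p n) :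
    ∃ m : ℕ → ℕ, (∀ i ≤ K, m i < n ∧ p (m i)) ∧ ∀ i j, i < j → j ≤ K → m i + g ≤ m j := by
  have lt_count {i : ℕ} (hi : i ≤ K) : i * g < Nat.count p n :=
    (Nat.mul_le_mul_right g hi).trans_lt h
  have lt_card {i : ℕ} (hi : i ≤ K) (hf : (Set.ofPred p).Finite) : i * g < hf.toFinset.card :=
    (lt_count hi).trans_le (Nat.count_le_card hf n)
  refine ⟨fun i => Nat.nth p (i * g), fun i hi =>
    ⟨Nat.nth_lt_of_lt_count (lt_count hi), Nat.nth_mem _ (lt_card hi)⟩, fun i j hij hj => ?_⟩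
  have count_i := Nat.count_nth (lt_card (hij.le.trans hj))
  have count_j := Nat.count_nth (lt_card hj)
  have mul_le : i * g + g ≤ j * g := by rw [← Nat.succ_mul]; exact Nat.mul_le_mul_right g hij
  by_contra! lt
  have := Nat.count_strict_mono (Nat.nth_mem _ (lt_card hj)) lt
  rw [Nat.count_add, count_i, count_j] at this
  have := Nat.count_le (p := fun k => p (Nat.nth p (i * g) + k)) (n := g)
  lia

variable {Ω : Type*} [MeasurableSpace Ω] {μ : Measure Ω} {T : Ω → Ω}

open scoped Classical in
theorem exists_mul_le_count_visits (hT : MeasurePreserving T μ μ) {G : Set Ω}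
    (hG : MeasurableSet G) {θ : ℝ} (hθ : ENNReal.ofReal θ * μ Set.univ < μ G) {n : ℕ}
    (hn : n ≠ 0) : ∃ x, n * θ ≤ Nat.count (fun k => T^[k] x ∈ G) n := by
  by_contra! count_lt
  have birkhoffSum_eq (x : Ω) : birkhoffSum T (G.indicator (1 : Ω → ℝ≥0∞)) n x =
      Nat.count (fun k => T^[k] x ∈ G) n := by
    simp [birkhoffSum, Nat.count_eq_card_filter_range, Set.indicator_apply]
  have le : n * μ G ≤ n * (ENNReal.ofReal θ * μ Set.univ) := calc
    n * μ G = ∫⁻ x, birkhoffSum T (G.indicator 1) n x ∂μ := by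
      rw [lintegral_birkhoffSum hT (measurable_one.indicator hG), lintegral_indicator_one hG]
    _ ≤ ∫⁻ _, ENNReal.ofReal (n * θ) ∂μ := lintegral_mono fun x => by
      rw [birkhoffSum_eq, ← ENNReal.ofReal_natCast]
      exact ENNReal.ofReal_le_ofReal (count_lt x).le
    _ = n * (ENNReal.ofReal θ * μ Set.univ) := by
      rw [lintegral_const, ENNReal.ofReal_mul (by positivity), ENNReal.ofReal_natCast, mul_assoc]
  exact hθ.not_ge
    ((ENNReal.mul_le_mul_iff_right (by exact_mod_cast hn) (ENNReal.natCast_ne_top n)).1 le)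

theorem eventually_exists_spaced_visits (hT : MeasurePreserving T μ μ) {G : Set Ω}
    (hG : MeasurableSet G) {θ : ℝ} (hθ0 : 0 < θ) (hθ : ENNReal.ofReal θ * μ Set.univ < μ G)
    (K : ℕ) :
    ∀ᶠ n : ℕ in atTop, ∃ (x : Ω) (m : ℕ → ℕ), (∀ i ≤ K, T^[m i] x ∈ G) ∧
      ∀ i j, i < j → j ≤ K →
        m i < m j ∧ θ / (2 * (K + 1)) * n ≤ (m j - m i : ℕ) ∧ m j - m i ≤ n := by
  classical
  set κ := θ / (2 * (K + 1))
  have κ_pos : 0 < κ := by positivity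
  have κ_mul : (K + 1) * κ = θ / 2 := by simp only [κ]; field_simp
  filter_upwards [eventually_gt_atTop 0, tendsto_natCast_atTop_atTop.eventually_gt_atTop
    (2 * K / θ)] with n n_pos lt_n
  obtain ⟨x, hx⟩ := exists_mul_le_count_visits hT hG hθ n_pos.ne'
  rw [div_lt_iff₀ hθ0] at lt_n
  have gap_lt : (⌈κ * n⌉₊ : ℝ) < κ * n + 1 := Nat.ceil_lt_add_one (by positivity)
  have n_pos' : (0 : ℝ) < n := by exact_mod_cast n_pos
  have lt_count : (K * ⌈κ * n⌉₊ : ℝ) < Nat.count (fun k => T^[k] x ∈ G) n := calc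
    (K * ⌈κ * n⌉₊ : ℝ) ≤ K * (κ * n + 1) := by gcongr
    _ = (K + 1) * κ * n + K - κ * n := by ring
    _ < n * θ := by rw [κ_mul]; nlinarith [mul_pos κ_pos n_pos']
    _ ≤ _ := hx
  obtain ⟨m, hm, spaced⟩ := exists_spaced_of_mul_lt_count (by exact_mod_cast lt_count)
  refine ⟨x, m, fun i hi => (hm i hi).2, fun i j hij hj => ?_⟩
  have gap_pos : 0 < ⌈κ * n⌉₊ := Nat.ceil_pos.2 (by positivity)
  have := spaced i j hij hj
  have := (hm j hj).1
  refine ⟨by lia, (Nat.le_ceil _).trans ?_, by lia⟩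
  exact_mod_cast (by lia : ⌈κ * n⌉₊ ≤ m j - m i)

end Visits

section RankFactorization

variable {F m n r : Type*} [Field F] [Fintype n] [Fintype r]

theorem exists_eq_mul_of_rank_eq_card (M : Matrix m n F)
    (h : M.rank = Fintype.card r) :
    ∃ (P : Matrix m r F) (Q : Matrix r n F), M = P * Q := by
  classical
  let b := (Module.finBasisOfFinrankEq F (LinearMap.range M.mulVecLin) h).reindex
    (Fintype.equivFin r).symm
  refine ⟨LinearMap.toMatrix' ((LinearMap.range M.mulVecLin).subtype ∘ₗ b.equivFun.symm),
    LinearMap.toMatrix' (b.equivFun ∘ₗ M.mulVecLin.rangeRestrict), Matrix.toLin'.injective ?_⟩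
  rw [← LinearMap.toMatrix'_comp, Matrix.toLin'_toMatrix']
  ext x
  simp

variable [DecidableEq r]

theorem det_ne_zero_of_card_le_rank {M : Matrix r r F} (h : Fintype.card r ≤ M.rank) :
    M.det ≠ 0 := by
  have cols_independent : LinearIndependent F M.col :=
    linearIndependent_iff_card_le_finrank_span.2 (h.trans_eq M.rank_eq_finrank_span_cols)
  exact ((Matrix.isUnit_iff_isUnit_det M).1
    (Matrix.linearIndependent_cols_iff_isUnit.1 cols_independent)).ne_zero

theorem det_mul_ne_zero_of_card_le_rank {P P' : Matrix n r F} {Q Q' : Matrix r n F}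
    (h : Fintype.card r ≤ (P' * Q' * (P * Q)).rank) : (Q' * P).det ≠ 0 := by
  rw [show P' * Q' * (P * Q) = P' * (Q' * P * Q) by simp only [Matrix.mul_assoc]] at h
  exact det_ne_zero_of_card_le_rank
    (h.trans ((Matrix.rank_mul_le_right _ _).trans (Matrix.rank_mul_le_left _ _)))

theorem det_mul_comm_eq_zero_of_isNilpotent [DecidableEq n] [Nonempty r] {X : Matrix n r F}
    {Y : Matrix r n F} (h : IsNilpotent (X * Y)) : (Y * X).det = 0 := by
  obtain ⟨k, hk⟩ := h
  have pow_succ_comm (k : ℕ) : (Y * X) ^ (k + 1) = Y * (X * Y) ^ k * X := by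
    induction k with
    | zero => simp
    | succ k ih => rw [pow_succ, ih, pow_succ]; simp only [Matrix.mul_assoc]
  have det_pow : (Y * X).det ^ (k + 1) = 0 := by
    rw [← Matrix.det_pow, pow_succ_comm, hk, Matrix.mul_zero, Matrix.zero_mul, Matrix.det_zero]
  exact eq_zero_of_pow_eq_zero det_pow

theorem det_mul_eq_zero_of_isNilpotent [DecidableEq n] [Nonempty r] {P : Matrix n r F}
    {C : Matrix r r F} {Q : Matrix r n F} (hnil : IsNilpotent (P * C * Q))
    (hrank : Fintype.card r ≤ (P * C * Q).rank) : (Q * P).det = 0 := by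
  have det_C : C.det ≠ 0 := det_ne_zero_of_card_le_rank
    (hrank.trans ((Matrix.rank_mul_le_left _ _).trans (Matrix.rank_mul_le_right _ _)))
  have det_QPC : (Q * (P * C)).det = 0 := det_mul_comm_eq_zero_of_isNilpotent hnil
  rw [← Matrix.mul_assoc, Matrix.det_mul] at det_QPC
  exact (mul_eq_zero.1 det_QPC).resolve_right det_C

theorem det_mul_eq_sum_det_submatrix {R : Type*} [CommRing R] (Q : Matrix r n R)
    (P : Matrix n r R) :
    (Q * P).det = ∑ p : r → n, (Q.submatrix id p).det * ∏ i, P (p i) i := by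
  simp only [Matrix.det_apply', Matrix.mul_apply, Finset.prod_univ_sum, Finset.mul_sum,
    Fintype.piFinset_univ, Finset.sum_mul, Matrix.submatrix_apply, id_eq]
  rw [Finset.sum_comm]
  simp only [Finset.prod_mul_distrib, mul_assoc]

-- Pairing two Plücker-type coordinate vectors of length `card n ^ card r` gives `det (Q i * P j)`,
-- so the triangular matrix of these determinants has rank at most `card n ^ card r`.
theorem card_le_pow_of_det_triangular {ι : Type*} [Fintype ι] [LinearOrder ι]
    (Q : ι → Matrix r n F) (P : ι → Matrix n r F) (hdiag : ∀ i, (Q i * P i).det ≠ 0)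
    (hlt : ∀ i j, i < j → (Q i * P j).det = 0) :
    Fintype.card ι ≤ Fintype.card n ^ Fintype.card r := by
  let X : Matrix ι (r → n) F := .of fun i p => ((Q i).submatrix id p).det
  let Y : Matrix (r → n) ι F := .of fun p j => ∏ k, P j (p k) k
  have mul_apply (i j : ι) : (X * Y) i j = (Q i * P j).det :=
    (det_mul_eq_sum_det_submatrix (Q i) (P j)).symm
  have det_ne_zero : (X * Y).det ≠ 0 := by
    rw [Matrix.det_of_isLowerTriangular _ fun i j hij => (mul_apply i j).trans (hlt i j hij)]
    exact Finset.prod_ne_zero_iff.2 fun i _ => (mul_apply i i).trans_ne (hdiag i)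
  calc Fintype.card ι = (X * Y).rank := (Matrix.rank_of_det_ne_zero det_ne_zero).symm
    _ ≤ Fintype.card (r → n) := (Matrix.rank_mul_le_left X Y).trans (Matrix.rank_le_card_width X)
    _ = Fintype.card n ^ Fintype.card r := by simp

end RankFactorization

section TransitionFamily

/-- `IsTransitionFamily K B` says that `B i j`, for `i < j ≤ K`, behaves like the evolution from
time `i` to time `j`, composed right to left; the values of `B` at other indices are irrelevant. -/
def IsTransitionFamily {M : Type*} [Mul M] (K : ℕ) (B : ℕ → ℕ → M) : Prop :=
  ∀ i j k, i < j → j < k → k ≤ K → B i k = B j k * B i j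

namespace IsTransitionFamily

theorem comp_strictMono {M : Type*} [Mul M] {K K' : ℕ} {B : ℕ → ℕ → M}
    (hB : IsTransitionFamily K B) {φ : ℕ → ℕ} (hφ : StrictMono φ) (hK : φ K' ≤ K) :
    IsTransitionFamily K' fun i j => B (φ i) (φ j) := fun _ _ _ hij hjk hk =>
  hB _ _ _ (hφ hij) (hφ hjk) ((hφ.monotone hk).trans hK)

theorem map {M N F : Type*} [Mul M] [Mul N] [FunLike F M N] [MulHomClass F M N] {K : ℕ}
    {B : ℕ → ℕ → M} (hB : IsTransitionFamily K B) (f : F) :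
    IsTransitionFamily K fun i j => f (B i j) := fun i j k hij hjk hk => by
  simp only [hB i j k hij hjk hk, map_mul]

variable {F n : Type*} [Field F] [Fintype n] {K : ℕ} {B : ℕ → ℕ → Matrix n n F}

theorem rank_le (hB : IsTransitionFamily K B) {i i' j' j : ℕ} (hi : i ≤ i') (h : i' < j')
    (hj : j' ≤ j) (hjK : j ≤ K) : (B i j).rank ≤ (B i' j').rank := calc
  (B i j).rank ≤ (B i j').rank := by
    rcases hj.eq_or_lt with rfl | hlt
    · rfl
    · exact hB i j' j (hi.trans_lt h) hlt hjK ▸ Matrix.rank_mul_le_right _ _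
  _ ≤ (B i' j').rank := by
    rcases hi.eq_or_lt with rfl | hlt
    · rfl
    · exact hB i i' j' hlt h (hj.trans hjK) ▸ Matrix.rank_mul_le_left _ _

theorem exists_eq_mul_mul (hB : IsTransitionFamily K B) {r : Type*} [Fintype r]
    {P : ℕ → Matrix n r F} {Q : ℕ → Matrix r n F} (hPQ : ∀ i < K, B i (i + 1) = P i * Q i)
    {i j : ℕ} (hij : i ≤ j) (hj : j < K) : ∃ C : Matrix r r F, B i (j + 1) = P j * C * Q i := by
  classical
  rcases hij.eq_or_lt with rfl | hlt
  · exact ⟨1, by rw [hPQ i hj, Matrix.mul_one]⟩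
  rcases (Nat.succ_le_of_lt hlt).eq_or_lt with rfl | hlt'
  · refine ⟨Q (i + 1) * P i, ?_⟩
    rw [hB i (i + 1) (i + 1 + 1) (by lia) (by lia) hj, hPQ i (by lia), hPQ (i + 1) hj]
    simp only [Matrix.mul_assoc]
  · refine ⟨Q j * B (i + 1) j * P i, ?_⟩
    rw [hB i j (j + 1) hlt (by lia) hj, hB i (i + 1) j (by lia) hlt' hj.le, hPQ i (by lia),
      hPQ j hj]
    simp only [Matrix.mul_assoc]

variable [DecidableEq n]

theorem le_pow_add_one_of_rank_eq (hB : IsTransitionFamily K B) {r : ℕ} (hr : r ≠ 0)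
    (hnil : ∀ i j, i < j → j ≤ K → IsNilpotent (B i j))
    (hrank : ∀ i j, i < j → j ≤ K → (B i j).rank = r) : K ≤ Fintype.card n ^ r + 1 := by
  have : NeZero r := ⟨hr⟩
  have factor (i : ℕ) (hi : i < K) :
      ∃ (P : Matrix n (Fin r) F) (Q : Matrix (Fin r) n F), B i (i + 1) = P * Q :=
    exists_eq_mul_of_rank_eq_card (B i (i + 1))
      ((hrank i (i + 1) (by lia) hi).trans (Fintype.card_fin r).symm)
  choose! P Q hPQ using factor
  have diag (i : ℕ) (hi : i + 1 < K) : (Q (i + 1) * P i).det ≠ 0 := by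
    refine det_mul_ne_zero_of_card_le_rank (P' := P (i + 1)) (Q := Q i) ?_
    rw [← hPQ i (by lia), ← hPQ (i + 1) hi, ← hB i (i + 1) (i + 1 + 1) (by lia) (by lia) hi,
      hrank i (i + 1 + 1) (by lia) hi, Fintype.card_fin]
  have upper (i j : ℕ) (hij : i ≤ j) (hj : j < K) : (Q i * P j).det = 0 := by
    obtain ⟨C, hC⟩ := hB.exists_eq_mul_mul hPQ hij hj
    refine det_mul_eq_zero_of_isNilpotent (hC ▸ hnil i (j + 1) (by lia) hj) ?_
    rw [← hC, hrank i (j + 1) (by lia) hj, Fintype.card_fin]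
  have := card_le_pow_of_det_triangular (ι := Fin (K - 1)) (fun i => Q (i + 1)) (fun i => P i)
    (fun i => diag i (by lia)) (fun i j hij => upper _ _ hij (by lia))
  simp only [Fintype.card_fin] at this
  lia

-- Cut `{0, …, K}` into blocks of length `card n ^ (r + 1) + 2`: no block has constant rank `r + 1`,
-- so the family restricted to the endpoints of the blocks has rank at most `r`.
theorem lt_prod_of_rank_le {r : ℕ} (hB : IsTransitionFamily K B)
    (hnil : ∀ i j, i < j → j ≤ K → IsNilpotent (B i j))
    (hne : ∀ i j, i < j → j ≤ K → B i j ≠ 0)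
    (hrank : ∀ i j, i < j → j ≤ K → (B i j).rank ≤ r) :
    K < ∏ s ∈ Finset.range r, (Fintype.card n ^ (s + 1) + 2) := by
  induction r generalizing K B with
  | zero =>
    by_contra! hK
    obtain ⟨P, Q, hPQ⟩ := exists_eq_mul_of_rank_eq_card (r := Fin 0) (B 0 1)
      (by simpa using hrank 0 1 one_pos (by simpa using hK))
    exact hne 0 1 one_pos (by simpa using hK) (by ext; simp [hPQ, Matrix.mul_apply])
  | succ r ih =>
    set b := Fintype.card n ^ (r + 1) + 2 with hb
    rw [Finset.prod_range_succ, ← hb, ← Nat.div_lt_iff_lt_mul (by lia)]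
    have mul_strictMono : StrictMono (b * ·) := fun i j hij =>
      Nat.mul_lt_mul_of_pos_left hij (by lia)
    have mul_le {j : ℕ} (hj : j ≤ K / b) : b * j ≤ K :=
      (Nat.mul_le_mul_left b hj).trans (Nat.mul_div_le K b)
    have block (s : ℕ) (hs : b * (s + 1) ≤ K) :
        ∃ i j, b * s ≤ i ∧ i < j ∧ j ≤ b * (s + 1) ∧ (B i j).rank ≠ r + 1 := by
      by_contra! rank_eq
      rw [Nat.mul_succ] at hs rank_eq
      have := (hB.comp_strictMono (φ := (b * s + ·)) (fun _ _ h => by simpa using h)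
        (K' := b) hs).le_pow_add_one_of_rank_eq r.succ_ne_zero
        (fun i j _ _ => hnil _ _ (by lia) (by lia))
        (fun i j _ _ => rank_eq _ _ (by lia) (by lia) (by lia))
      lia
    refine ih (hB.comp_strictMono mul_strictMono (Nat.mul_div_le K b))
      (fun i j hij hj => hnil _ _ (mul_strictMono hij) (mul_le hj))
      (fun i j hij hj => hne _ _ (mul_strictMono hij) (mul_le hj)) fun i j hij hj => ?_
    have next_le : b * (i + 1) ≤ b * j := Nat.mul_le_mul_left b hij
    obtain ⟨i', j', hi, hij', hj', rank_ne⟩ := block i (next_le.trans (mul_le hj))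
    have := hB.rank_le hi hij' (hj'.trans next_le) (mul_le hj)
    have := hrank i' j' hij' (hj'.trans (next_le.trans (mul_le hj)))
    lia

theorem lt_prod (hB : IsTransitionFamily K B)
    (hnil : ∀ i j, i < j → j ≤ K → IsNilpotent (B i j))
    (hne : ∀ i j, i < j → j ≤ K → B i j ≠ 0) :
    K < ∏ s ∈ Finset.range (Fintype.card n), (Fintype.card n ^ (s + 1) + 2) :=
  hB.lt_prod_of_rank_le hnil hne fun i j _ _ => (B i j).rank_le_card_width

end IsTransitionFamily

end TransitionFamily

section ExponentialScale

open Asymptotics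

variable {ι E : Type*} [NormedAddCommGroup E] {l : Filter ι} {t : ι → ℝ}

/-- `f` is of subexponential growth along `l`, measured on the time scale `t`. -/
def IsSubexponential (l : Filter ι) (t : ι → ℝ) (f : ι → E) : Prop :=
  ∀ ε > 0, f =O[l] fun p => Real.exp (ε * t p)

/-- `f` decays exponentially along `l`, measured on the time scale `t`. -/
def IsExponentiallySmall (l : Filter ι) (t : ι → ℝ) (f : ι → E) : Prop :=
  ∃ δ > 0, f =O[l] fun p => Real.exp (-δ * t p)

theorem isBigO_exp_mul_of_le {a b : ℝ} (ht : Tendsto t l atTop) (hab : a ≤ b) :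
    (fun p => Real.exp (a * t p)) =O[l] fun p => Real.exp (b * t p) := by
  refine .of_norm_eventuallyLE ?_
  filter_upwards [ht.eventually_ge_atTop 0] with p hp
  rw [Real.norm_of_nonneg (Real.exp_nonneg _)]
  gcongr

theorem not_isExponentiallySmall_one {𝕜 : Type*} [NormedField 𝕜] [l.NeBot]
    (ht : Tendsto t l atTop) : ¬ IsExponentiallySmall l t (1 : ι → 𝕜) := by
  rintro ⟨δ, hδ, h⟩
  have exp_tendsto : Tendsto (fun p => Real.exp (-δ * t p)) l (𝓝 0) :=
    Real.tendsto_exp_atBot.comp (ht.const_mul_atTop_of_neg (neg_neg_of_pos hδ))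
  exact one_ne_zero (tendsto_nhds_unique tendsto_const_nhds (h.trans_tendsto exp_tendsto))

namespace IsExponentiallySmall

theorem mul_isSubexponential {𝕜 : Type*} [NormedField 𝕜] {f g : ι → 𝕜}
    (hf : IsExponentiallySmall l t f) (hg : IsSubexponential l t g) :
    IsExponentiallySmall l t (g * f) := by
  obtain ⟨δ, hδ, hf⟩ := hf
  refine ⟨δ / 2, half_pos hδ, ((hg (δ / 2) (half_pos hδ)).mul hf).congr_right fun p => ?_⟩
  rw [← Real.exp_add]
  ring_nf

theorem add {f g : ι → E} (ht : Tendsto t l atTop) (hf : IsExponentiallySmall l t f)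
    (hg : IsExponentiallySmall l t g) : IsExponentiallySmall l t (f + g) := by
  obtain ⟨δ, hδ, hf⟩ := hf
  obtain ⟨δ', hδ', hg⟩ := hg
  exact ⟨min δ δ', lt_min hδ hδ',
    (hf.trans (isBigO_exp_mul_of_le ht (neg_le_neg (min_le_left _ _)))).add
      (hg.trans (isBigO_exp_mul_of_le ht (neg_le_neg (min_le_right _ _))))⟩

theorem sum {κ : Type*} {s : Finset κ} {f : κ → ι → E} (ht : Tendsto t l atTop)
    (hf : ∀ k ∈ s, IsExponentiallySmall l t (f k)) : IsExponentiallySmall l t (∑ k ∈ s, f k) :=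
  Finset.sum_induction f (IsExponentiallySmall l t) (fun _ _ => add ht)
    ⟨1, one_pos, isBigO_zero _ l⟩ hf

end IsExponentiallySmall

section Ultrafilter

variable {𝕜 : Type*} [NormedField 𝕜] {U : Ultrafilter ι} {f : ι → 𝕜}

theorem eventually_exp_lt_norm_of_not_isExponentiallySmall (hf : ¬ IsExponentiallySmall U t f)
    {ε : ℝ} (hε : 0 < ε) : ∀ᶠ p in U, Real.exp (-ε * t p) < ‖f p‖ := by
  by_contra h
  rw [← Ultrafilter.eventually_not] at h
  exact hf ⟨ε, hε, .of_norm_eventuallyLE (h.mono fun p hp => not_lt.1 hp)⟩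

theorem isSubexponential_inv_of_not_isExponentiallySmall (hf : ¬ IsExponentiallySmall U t f) :
    IsSubexponential U t f⁻¹ := by
  refine fun ε hε => .of_norm_eventuallyLE ?_
  filter_upwards [eventually_exp_lt_norm_of_not_isExponentiallySmall hf hε] with p hp
  rw [Pi.inv_apply, norm_inv]
  refine inv_le_of_inv_le₀ (Real.exp_pos _) ?_
  rw [← Real.exp_neg, ← neg_mul]
  exact hp.le

end Ultrafilter

end ExponentialScale

section ResidueField

variable {ι : Type*} (𝕜 : Type*) [NormedField 𝕜] {l : Filter ι} {t : ι → ℝ}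

/-- The ring of `𝕜`-valued sequences of subexponential growth. -/
def subexponentialSubring (ht : Tendsto t l atTop) : Subring (ι → 𝕜) where
  carrier := {f | IsSubexponential l t f}
  mul_mem' {f g} hf hg ε hε :=
    ((hf (ε / 2) (half_pos hε)).mul (hg (ε / 2) (half_pos hε))).congr_right fun p => by
      rw [← Real.exp_add]
      ring_nf
  one_mem' ε hε := by
    refine .of_norm_eventuallyLE ?_
    filter_upwards [ht.eventually_ge_atTop 0] with p hp
    simpa using mul_nonneg hε.le hp
  add_mem' {f g} hf hg ε hε := (hf ε hε).add (hg ε hε)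
  zero_mem' ε _ := Asymptotics.isBigO_zero _ l
  neg_mem' {f} hf ε hε := (hf ε hε).neg_left

/-- The ideal of exponentially small sequences among those of subexponential growth. -/
def exponentiallySmallIdeal (ht : Tendsto t l atTop) : Ideal (subexponentialSubring 𝕜 ht) where
  carrier := {f | IsExponentiallySmall l t (f : ι → 𝕜)}
  add_mem' hf hg := hf.add ht hg
  zero_mem' := ⟨1, one_pos, Asymptotics.isBigO_zero _ l⟩
  smul_mem' c _ hf := hf.mul_isSubexponential c.2

/-- Evaluation of sequences of subexponential growth at an index. -/
def subexponentialEval (ht : Tendsto t l atTop) (p : ι) : subexponentialSubring 𝕜 ht →+* 𝕜 :=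
  (Pi.evalRingHom (fun _ => 𝕜) p).comp (subexponentialSubring 𝕜 ht).subtype

theorem isMaximal_exponentiallySmallIdeal {U : Ultrafilter ι} (ht : Tendsto t U atTop) :
    (exponentiallySmallIdeal 𝕜 ht).IsMaximal := by
  refine Ideal.isMaximal_iff.2 ⟨not_isExponentiallySmall_one ht, fun I f hI hf hfI => ?_⟩
  let g : subexponentialSubring 𝕜 ht :=
    ⟨(f : ι → 𝕜)⁻¹, isSubexponential_inv_of_not_isExponentiallySmall hf⟩
  have one_sub_mem : 1 - g * f ∈ exponentiallySmallIdeal 𝕜 ht := by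
    refine ⟨1, one_pos, .of_norm_eventuallyLE ?_⟩
    filter_upwards [eventually_exp_lt_norm_of_not_isExponentiallySmall hf one_pos] with p hp
    have ne_zero : (f : ι → 𝕜) p ≠ 0 := norm_pos_iff.1 ((Real.exp_pos _).trans hp)
    change ‖1 - ((f : ι → 𝕜) p)⁻¹ * (f : ι → 𝕜) p‖ ≤ _
    rw [inv_mul_cancel₀ ne_zero, sub_self, norm_zero]
    positivity
  simpa using I.add_mem (hI one_sub_mem) (I.mul_mem_left g hfI)

end ResidueField

section ReductionModuloExponentiallySmall

variable {n : Type*} [Fintype n] [DecidableEq n]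

theorem isNilpotent_map_mk_of_charpoly_coeff_mem {R : Type*} [CommRing R] {I : Ideal R}
    {M : Matrix n n R} (h : ∀ i < Fintype.card n, M.charpoly.coeff i ∈ I) :
    IsNilpotent (M.map (Ideal.Quotient.mk I)) := by
  nontriviality R ⧸ I
  set N := M.map (Ideal.Quotient.mk I) with hN
  have charpoly_eq : N.charpoly = Polynomial.X ^ Fintype.card n := by
    rw [N.charpoly_monic.as_sum, N.charpoly_natDegree_eq_dim, add_eq_left]
    refine Finset.sum_eq_zero fun i hi => ?_
    rw [hN, Matrix.charpoly_map, Polynomial.coeff_map,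
      Ideal.Quotient.eq_zero_iff_mem.2 (h i (Finset.mem_range.1 hi)), map_zero, zero_mul]
  exact ⟨Fintype.card n, by simpa [charpoly_eq] using N.aeval_self_charpoly⟩

variable {𝕜 : Type*} [NormedField 𝕜] [IsAlgClosed 𝕜]

theorem norm_charpoly_coeff_le_of_spectrum_le {A : Matrix n n 𝕜} {r : ℝ}
    (h : ∀ z ∈ spectrum 𝕜 A, ‖z‖ ≤ r) (i : ℕ) :
    ‖A.charpoly.coeff i‖ ≤ r ^ (Fintype.card n - i) * (Fintype.card n).choose i := by
  have roots_le : ∀ z ∈ (A.charpoly.map (RingHom.id 𝕜)).roots, ‖z‖ ≤ r := fun z hz =>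
    h z (Matrix.mem_spectrum_of_isRoot_charpoly
      (Polynomial.isRoot_of_mem_roots (by rwa [Polynomial.map_id] at hz)))
  simpa using Polynomial.coeff_le_of_roots_le i A.charpoly_monic (IsAlgClosed.splits _) roots_le

variable {ι : Type*} {l : Filter ι} {t : ι → ℝ}

theorem isNilpotent_map_mk_of_spectrum_le (ht : Tendsto t l atTop) {σ : ℝ} (hσ : 0 < σ)
    {M : Matrix n n (subexponentialSubring 𝕜 ht)}
    (h : ∀ᶠ p in l, ∀ z ∈ spectrum 𝕜 (M.map (subexponentialEval 𝕜 ht p)),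
      ‖z‖ ≤ Real.exp (-σ * t p)) :
    IsNilpotent (M.map (Ideal.Quotient.mk (exponentiallySmallIdeal 𝕜 ht))) := by
  refine isNilpotent_map_mk_of_charpoly_coeff_mem fun i hi => ⟨σ, hσ, .of_bound
    ((Fintype.card n).choose i) ?_⟩
  filter_upwards [h, ht.eventually_ge_atTop 0] with p hp t_nonneg
  have coeff_eq : (M.map (subexponentialEval 𝕜 ht p)).charpoly.coeff i =
      (M.charpoly.coeff i : ι → 𝕜) p := by
    rw [Matrix.charpoly_map, Polynomial.coeff_map]
    rfl
  have exp_le_one : Real.exp (-σ * t p) ≤ 1 := Real.exp_le_one_iff.2 (by nlinarith)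
  rw [← coeff_eq, mul_comm, Real.norm_of_nonneg (Real.exp_nonneg _)]
  refine (norm_charpoly_coeff_le_of_spectrum_le hp i).trans ?_
  gcongr
  exact pow_le_of_le_one (Real.exp_nonneg _) exp_le_one (by lia)

theorem IsTransitionFamily.lt_prod_of_spectrum_le {U : Ultrafilter ι} (ht : Tendsto t U atTop)
    {σ : ℝ} (hσ : 0 < σ) {K : ℕ} {A : ℕ → ℕ → ι → Matrix n n 𝕜} (hA : IsTransitionFamily K A)
    (hsub : ∀ i j, i < j → j ≤ K → ∀ a b, IsSubexponential U t fun p => A i j p a b)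
    (hsmall : ∀ i j, i < j → j ≤ K → ∃ a b, ¬ IsExponentiallySmall U t fun p => A i j p a b)
    (hspec : ∀ i j, i < j → j ≤ K → ∀ᶠ p in U, ∀ z ∈ spectrum 𝕜 (A i j p),
      ‖z‖ ≤ Real.exp (-σ * t p)) :
    K < ∏ s ∈ Finset.range (Fintype.card n), (Fintype.card n ^ (s + 1) + 2) := by
  have lift (i j : ℕ) (hij : i < j) (hj : j ≤ K) :
      ∃ M : Matrix n n (subexponentialSubring 𝕜 ht),
        ∀ p, M.map (subexponentialEval 𝕜 ht p) = A i j p :=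
    ⟨.of fun a b => ⟨fun p => A i j p a b, hsub i j hij hj a b⟩, fun _ => rfl⟩
  choose! M hM using lift
  have := isMaximal_exponentiallySmallIdeal 𝕜 ht
  let := Ideal.Quotient.field (exponentiallySmallIdeal 𝕜 ht)
  have transition : IsTransitionFamily K M := fun i j k hij hjk hk => by
    ext a b p
    have eval_eq : (M i k).map (subexponentialEval 𝕜 ht p) =
        (M j k * M i j).map (subexponentialEval 𝕜 ht p) := by
      rw [Matrix.map_mul, hM i k (hij.trans hjk) hk, hM j k hjk hk, hM i j hij (hjk.le.trans hk)]
      exact congrFun (hA i j k hij hjk hk) p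
    exact congrFun₂ eval_eq a b
  refine (transition.map (Ideal.Quotient.mk (exponentiallySmallIdeal 𝕜 ht)).mapMatrix).lt_prod
    (fun i j hij hj => ?_) (fun i j hij hj map_eq_zero => ?_)
  · exact isNilpotent_map_mk_of_spectrum_le ht hσ
      (by simpa only [hM i j hij hj] using hspec i j hij hj)
  · obtain ⟨a, b, not_small⟩ := hsmall i j hij hj
    have entry_eq : (M i j a b : ι → 𝕜) = fun p => A i j p a b :=
      funext fun p => congrFun₂ (hM i j hij hj p) a b
    have entry_mem : M i j a b ∈ exponentiallySmallIdeal 𝕜 ht :=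
      Ideal.Quotient.eq_zero_iff_mem.1 (congrFun₂ map_eq_zero a b)
    exact not_small (entry_eq ▸ entry_mem)

end ReductionModuloExponentiallySmall

section SpectralRadius

theorem spectralRadius_smul {𝕜 A : Type*} [NormedField 𝕜] [Ring A] [Algebra 𝕜 A] (c : 𝕜)
    (a : A) : spectralRadius 𝕜 (c • a) = ‖c‖ₑ * spectralRadius 𝕜 a := by
  rcases eq_or_ne c 0 with rfl | hc
  · simp
  have spectrum_smul : spectrum 𝕜 (c • a) = (c * ·) '' spectrum 𝕜 a :=
    spectrum.unit_smul_eq_smul a (Units.mk0 c hc)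
  simp only [spectralRadius, spectrum_smul, iSup_image, nnnorm_mul, ENNReal.coe_mul,
    ENNReal.mul_iSup]
  rfl

section NormOneClass

variable {𝕜 A : Type*} [NormedField 𝕜] [NormedRing A] [NormedAlgebra 𝕜 A] [CompleteSpace A]
  [NormOneClass A]

theorem toReal_spectralRadius_le_norm (a : A) : (spectralRadius 𝕜 a).toReal ≤ ‖a‖ :=
  ENNReal.toReal_mono ENNReal.coe_ne_top (spectrum.spectralRadius_le_nnnorm a)

theorem norm_le_toReal_spectralRadius {a : A} {z : 𝕜} (hz : z ∈ spectrum 𝕜 a) :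
    ‖z‖ ≤ (spectralRadius 𝕜 a).toReal :=
  ENNReal.toReal_mono (ne_top_of_le_ne_top ENNReal.coe_ne_top (spectrum.spectralRadius_le_nnnorm a))
    (le_iSup₂ (f := fun k (_ : k ∈ spectrum 𝕜 a) => (‖k‖₊ : ℝ≥0∞)) z hz)

end NormOneClass

theorem measurable_spectralRadius {Ω A : Type*} [MeasurableSpace Ω] [NormedRing A]
    [NormedAlgebra ℂ A] [CompleteSpace A] {f : Ω → A} (hf : StronglyMeasurable f) :
    Measurable fun x => spectralRadius ℂ (f x) :=
  measurable_of_tendsto_metrizable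
    (fun k => ((hf.pow k).norm.measurable.pow_const _).ennreal_ofReal)
    (tendsto_pi_nhds.2 fun x =>
      spectrum.pow_norm_pow_one_div_tendsto_nhds_spectralRadius (f x))

end SpectralRadius

section MatrixEntries

theorem stronglyMeasurable_of_matrix_entries {Ω m n : Type*} [MeasurableSpace Ω] [Finite m]
    [Finite n] {M : Ω → Matrix m n ℂ} (h : ∀ a b, Measurable fun x => M x a b) :
    StronglyMeasurable M :=
  have : Measurable fun x a b => M x a b :=
    measurable_pi_lambda _ fun a => measurable_pi_lambda _ (h a)
  this.stronglyMeasurable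

open Asymptotics
open scoped Matrix.Norms.L2Operator

variable {n ι : Type*} [Fintype n] [DecidableEq n] {l : Filter ι}

theorem isBigO_matrix_entry (A : ι → Matrix n n ℂ) (a b : n) :
    (fun p => A p a b) =O[l] A :=
  (Matrix.entryLinearMap ℂ ℂ a b).toContinuousLinearMap.isBigO_comp A l

theorem IsExponentiallySmall.of_matrix_entries {t : ι → ℝ} (ht : Tendsto t l atTop)
    {A : ι → Matrix n n ℂ} (h : ∀ a b, IsExponentiallySmall l t fun p => A p a b) :
    IsExponentiallySmall l t A := by
  have entry_smul_single (a b : n) :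
      IsExponentiallySmall l t fun p => A p a b • Matrix.single a b (1 : ℂ) := by
    obtain ⟨δ, hδ, hA⟩ := h a b
    exact ⟨δ, hδ,
      ((ContinuousLinearMap.toSpanSingleton ℂ (Matrix.single a b 1)).isBigO_comp _ l).trans hA⟩
  convert IsExponentiallySmall.sum (s := Finset.univ) ht fun a _ =>
    IsExponentiallySmall.sum (s := Finset.univ) ht fun b _ => entry_smul_single a b
  ext1 p
  simpa using (A p).matrix_eq_sum_single

end MatrixEntries

section Cocycle

/-- A cocycle over `T` with values in a monoid: `L x n` is the product of the generator `L · 1`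
along the first `n` points of the orbit of `x`, later factors standing on the left. -/
structure IsCocycle {Ω M : Type*} [Monoid M] (T : Ω → Ω) (L : Ω → ℕ → M) : Prop where
  zero : ∀ x, L x 0 = 1
  add : ∀ x m n, L x (m + n) = L (T^[n] x) m * L x n

namespace IsCocycle

variable {Ω M : Type*} {T : Ω → Ω}

section Monoid

variable [Monoid M] {L : Ω → ℕ → M}

theorem of_pos (zero : ∀ x, L x 0 = 1)
    (add : ∀ x m n, 1 ≤ m → 1 ≤ n → L x (m + n) = L (T^[n] x) m * L x n) : IsCocycle T L where
  zero := zero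
  add
    | x, 0, n => by rw [zero, zero_add, one_mul]
    | x, m + 1, 0 => by rw [zero, mul_one, add_zero, Function.iterate_zero_apply]
    | x, m + 1, n + 1 => add x _ _ m.succ_pos n.succ_pos

theorem isTransitionFamily (hL : IsCocycle T L) (x : Ω) {K : ℕ} {m : ℕ → ℕ}
    (hm : ∀ i j, i < j → j ≤ K → m i < m j) :
    IsTransitionFamily K fun i j => L (T^[m i] x) (m j - m i) := fun i j k hij hjk hk => by
  have hij' := hm i j hij (hjk.le.trans hk)
  have hjk' := hm j k hjk hk
  have := hL.add (T^[m i] x) (m k - m j) (m j - m i)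
  rwa [← Function.iterate_add_apply, Nat.sub_add_cancel hij'.le,
    Nat.sub_add_sub_cancel hjk'.le hij'.le] at this

end Monoid

theorem pow_smul {R : Type*} [CommSemiring R] [Semiring M] [Algebra R M] {L : Ω → ℕ → M}
    (hL : IsCocycle T L) {c : Ω → R} (hc : c ∘ T = c) : IsCocycle T fun x n => c x ^ n • L x n where
  zero x := by rw [hL.zero, pow_zero, one_smul]
  add x m n := by
    have c_iterate : c (T^[n] x) = c x := congrFun (Function.iterate_invariant hc n) x
    rw [hL.add, c_iterate, smul_mul_smul_comm, pow_add]

theorem isSubmultiplicativeCocycle_norm [NormedRing M] [NormOneClass M] {L : Ω → ℕ → M}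
    (hL : IsCocycle T L) : IsSubmultiplicativeCocycle T fun n x => ‖L x n‖ where
  nonneg _ _ := norm_nonneg _
  zero_le x := by rw [hL.zero, norm_one]
  add_le m n x := by
    rw [add_comm, hL.add, mul_comm]
    exact norm_mul_le _ _

end IsCocycle

end Cocycle

section NearlyNilpotent

variable {A : Type*} [NormedRing A] [NormedAlgebra ℂ A]

/-- On the exponential scale `t`, the spectral radius of `a` is small, while its norm is close
to one. -/
def IsNearlyNilpotent (δ ε t : ℝ) (a : A) : Prop :=
  (spectralRadius ℂ a).toReal ≤ Real.exp (-δ * t) ∧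
    ‖a‖ ∈ Set.Icc (Real.exp (-ε * t)) (Real.exp (ε * t))

theorem IsNearlyNilpotent.of_le_of_le {δ ε κ s t : ℝ} {a : A} (hδ : 0 ≤ δ) (hε : 0 ≤ ε)
    (h : IsNearlyNilpotent δ ε s a) (hκ : κ * t ≤ s) (ht : s ≤ t) :
    IsNearlyNilpotent (δ * κ) ε t a := by
  refine ⟨h.1.trans ?_, .trans ?_ h.2.1, h.2.2.trans ?_⟩ <;> rw [Real.exp_le_exp]
  · linarith [mul_le_mul_of_nonneg_left hκ hδ]
  · linarith [mul_le_mul_of_nonneg_left ht hε]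
  · exact mul_le_mul_of_nonneg_left ht hε

theorem IsNearlyNilpotent.mono {δ ε ε' t : ℝ} {a : A} (h : IsNearlyNilpotent δ ε t a)
    (ht : 0 ≤ t) (hε : ε ≤ ε') : IsNearlyNilpotent δ ε' t a := by
  refine ⟨h.1, .trans ?_ h.2.1, h.2.2.trans ?_⟩ <;> gcongr

theorem measurableSet_isNearlyNilpotent [CompleteSpace A] {Ω : Type*} [MeasurableSpace Ω]
    {f : Ω → A} (hf : StronglyMeasurable f) (δ ε t : ℝ) :
    MeasurableSet {x | IsNearlyNilpotent δ ε t (f x)} :=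
  (measurableSet_le (measurable_spectralRadius hf).ennreal_toReal measurable_const).inter
    (hf.norm.measurable measurableSet_Icc)

theorem eventually_norm_mem_Icc_of_tendsto {E : Type*} [SeminormedAddCommGroup E] {a : ℕ → E}
    (ha : Tendsto (fun n => ‖a n‖ ^ (1 / (n : ℝ))) atTop (𝓝 1)) {ε : ℝ} (hε : 0 < ε) :
    ∀ᶠ n : ℕ in atTop, ‖a n‖ ∈ Set.Icc (Real.exp (-ε * n)) (Real.exp (ε * n)) := by
  have exp_lt : Real.exp (-ε) < 1 := Real.exp_lt_one_iff.2 (neg_neg_of_pos hε)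
  have lt_exp : 1 < Real.exp ε := Real.one_lt_exp_iff.2 hε
  filter_upwards [ha.eventually_mem (Icc_mem_nhds exp_lt lt_exp), eventually_ne_atTop 0]
    with n ⟨exp_le, le_exp⟩ hn
  have root_pow : (‖a n‖ ^ (1 / (n : ℝ))) ^ n = ‖a n‖ := by
    rw [one_div, Real.rpow_inv_natCast_pow (norm_nonneg _) hn]
  rw [mul_comm, mul_comm ε, Real.exp_nat_mul, Real.exp_nat_mul, ← root_pow]
  exact ⟨pow_le_pow_left₀ (Real.exp_nonneg _) exp_le n, pow_le_pow_left₀ (by positivity) le_exp n⟩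

theorem not_isExponentiallySmall_of_exp_le_norm {ι E : Type*} [NormedAddCommGroup E]
    {l : Filter ι} [l.NeBot] {t : ι → ℝ} (ht : Tendsto t l atTop) {f : ι → E}
    (hf : ∀ ε > 0, ∀ᶠ p in l, Real.exp (-ε * t p) ≤ ‖f p‖) : ¬ IsExponentiallySmall l t f := by
  rintro ⟨δ, hδ, hfδ⟩
  have exp_isBigO : (fun p => Real.exp (-(δ / 2) * t p)) =O[l] fun p => Real.exp (-δ * t p) := by
    refine .trans (.of_norm_eventuallyLE ?_) hfδ.norm_left
    filter_upwards [hf (δ / 2) (half_pos hδ)] with p hp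
    rwa [Real.norm_of_nonneg (Real.exp_nonneg _)]
  rw [Real.isBigO_exp_comp_exp_comp] at exp_isBigO
  refine not_isBoundedUnder_of_tendsto_atTop ((ht.const_mul_atTop (half_pos hδ)).congr fun p => ?_)
    exp_isBigO
  rw [Pi.sub_apply]
  ring

end NearlyNilpotent

section NearlyNilpotentMatrices

open scoped Matrix.Norms.L2Operator

variable {n : Type*} [Fintype n] [DecidableEq n] [Nonempty n]

theorem lt_prod_of_isNearlyNilpotent {σ : ℝ} (hσ : 0 < σ) {K : ℕ}
    (h : ∀ ε > 0, ∀ c : ℝ, ∃ t ≥ c, ∃ B : ℕ → ℕ → Matrix n n ℂ, IsTransitionFamily K B ∧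
      ∀ i j, i < j → j ≤ K → IsNearlyNilpotent σ ε t (B i j)) :
    K < ∏ s ∈ Finset.range (Fintype.card n), (Fintype.card n ^ (s + 1) + 2) := by
  choose t ht B hB nilpotent using fun p : ℕ => h (1 / ((p : ℝ) + 1)) (by positivity) p
  let U := hyperfilter ℕ
  have t_tendsto : Tendsto t U atTop :=
    (tendsto_atTop_mono ht tendsto_natCast_atTop_atTop).mono_left Nat.hyperfilter_le_atTop
  have nilpotent_of_pos (ε : ℝ) (hε : 0 < ε) : ∀ᶠ p in U, ∀ i j, i < j → j ≤ K →
      IsNearlyNilpotent σ ε (t p) (B p i j) := by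
    have eventually_le : ∀ᶠ p : ℕ in atTop, 1 / ((p : ℝ) + 1) ≤ ε :=
      tendsto_one_div_add_atTop_nhds_zero_nat.eventually_le_const hε
    filter_upwards [Nat.hyperfilter_le_atTop eventually_le, t_tendsto.eventually_ge_atTop 0]
      with p hp t_nonneg i j hij hj
    exact (nilpotent p i j hij hj).mono t_nonneg hp
  refine IsTransitionFamily.lt_prod_of_spectrum_le t_tendsto hσ (A := fun i j p => B p i j)
    (fun i j k hij hjk hk => funext fun p => hB p i j k hij hjk hk)
    (fun i j hij hj a b ε hε => ?_) (fun i j hij hj => ?_) (fun i j hij hj => ?_)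
  · refine (isBigO_matrix_entry _ a b).trans (.of_norm_eventuallyLE ?_)
    exact (nilpotent_of_pos ε hε).mono fun p hp => (hp i j hij hj).2.2
  · by_contra! small
    refine not_isExponentiallySmall_of_exp_le_norm t_tendsto (fun ε hε => ?_)
      (IsExponentiallySmall.of_matrix_entries t_tendsto small)
    exact (nilpotent_of_pos ε hε).mono fun p hp => (hp i j hij hj).2.1
  · exact (nilpotent_of_pos 1 one_pos).mono fun p hp z hz =>
      (norm_le_toReal_spectralRadius hz).trans (hp i j hij hj).1

end NearlyNilpotentMatrices

theorem limsup_eq_of_le_of_frequently_lt {ι : Type*} {f : Filter ι} [f.NeBot] {a s : ι → ℝ}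
    {l : ℝ} (ha : Tendsto a f (𝓝 l)) (hs : s ≤ a) (hf : ∀ c < l, ∃ᶠ i in f, c < s i) :
    limsup s f = l := by
  have bdd : IsBoundedUnder (· ≤ ·) f s := ha.isBoundedUnder_le.mono_le (.of_forall hs)
  have cobdd : IsCoboundedUnder (· ≤ ·) f s :=
    .of_frequently_ge ((hf (l - 1) (sub_one_lt l)).mono fun _ => le_of_lt)
  refine le_antisymm ?_ (le_of_forall_lt fun c hc => ?_)
  · rw [← ha.limsup_eq]
    exact limsup_le_limsup (.of_forall hs) cobdd ha.isBoundedUnder_le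
  · obtain ⟨b, hcb, hbl⟩ := exists_between hc
    exact hcb.trans_le (le_limsup_of_frequently_le ((hf b hbl).mono fun _ => le_of_lt) bdd)

section SpectralRadiusOfCocycles

variable {Ω : Type*} [MeasurableSpace Ω] {μ : Measure Ω} {T : Ω → Ω}

theorem IsCocycle.exists_isTransitionFamily_isNearlyNilpotent {A : Type*} [NormedRing A]
    [NormedAlgebra ℂ A] [CompleteSpace A] {L : Ω → ℕ → A} (hL : IsCocycle T L)
    (hT : MeasurePreserving T μ μ) (hLm : ∀ n, StronglyMeasurable fun x => L x n)
    {δ ε θ : ℝ} (hδ : 0 ≤ δ) (hε : 0 ≤ ε) (hθ0 : 0 < θ) {N : ℕ}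
    (hθ : ENNReal.ofReal θ * μ Set.univ < μ {x | ∀ n ≥ N, IsNearlyNilpotent δ ε n (L x n)})
    (K : ℕ) (c : ℝ) :
    ∃ t ≥ c, ∃ B : ℕ → ℕ → A, IsTransitionFamily K B ∧
      ∀ i j, i < j → j ≤ K → IsNearlyNilpotent (δ * (θ / (2 * (K + 1)))) ε t (B i j) := by
  have measurable : MeasurableSet {x | ∀ n ≥ N, IsNearlyNilpotent δ ε n (L x n)} := by
    simp only [Set.ofPred_forall]
    exact .iInter fun n => .iInter fun _ => measurableSet_isNearlyNilpotent (hLm n) δ ε n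
  have gap_tendsto : Tendsto (fun n : ℕ => θ / (2 * (K + 1)) * n) atTop atTop :=
    tendsto_natCast_atTop_atTop.const_mul_atTop (by positivity)
  obtain ⟨n, ⟨x, m, visit, spaced⟩, c_le, N_le⟩ :=
    ((eventually_exists_spaced_visits hT measurable hθ0 hθ K).and
      ((tendsto_natCast_atTop_atTop.eventually_ge_atTop c).and
        (gap_tendsto.eventually_ge_atTop N))).exists
  refine ⟨n, c_le, _, hL.isTransitionFamily x fun i j hij hj => (spaced i j hij hj).1,
    fun i j hij hj => ?_⟩
  obtain ⟨-, gap_le, le_n⟩ := spaced i j hij hj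
  exact (visit i (hij.le.trans hj) _ (by exact_mod_cast N_le.trans gap_le)).of_le_of_le hδ hε
    gap_le (by exact_mod_cast le_n)

open scoped Matrix.Norms.L2Operator

variable {n : Type*} [Fintype n] [DecidableEq n] [Nonempty n] {L : Ω → ℕ → Matrix n n ℂ}
  [IsFiniteMeasure μ]

namespace IsCocycle

theorem ae_not_eventually_isNearlyNilpotent (hL : IsCocycle T L) (hT : MeasurePreserving T μ μ)
    (hLm : ∀ k, StronglyMeasurable fun x => L x k) {δ : ℝ} (hδ : 0 < δ) :
    ∀ᵐ x ∂μ, ¬ ∀ ε > 0, ∀ᶠ k : ℕ in atTop, IsNearlyNilpotent δ ε k (L x k) := by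
  by_contra measure_ne_zero
  rw [ae_iff] at measure_ne_zero
  simp only [not_not] at measure_ne_zero
  obtain ⟨θ, θ_pos, hθ⟩ :=
    ENNReal.exists_nnreal_pos_mul_lt (measure_ne_top μ Set.univ) measure_ne_zero
  rw [← ENNReal.ofReal_coe_nnreal] at hθ
  have exists_lt_measure (ε : ℝ) (hε : 0 < ε) : ∃ N : ℕ, ENNReal.ofReal θ * μ Set.univ <
      μ {x | ∀ k ≥ N, IsNearlyNilpotent δ ε k (L x k)} := by
    have mono : Monotone fun N : ℕ => {x | ∀ k ≥ N, IsNearlyNilpotent δ ε k (L x k)} :=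
      fun N N' hN x hx k hk => hx k (hN.trans hk)
    refine ((tendsto_measure_iUnion_atTop (μ := μ) mono).eventually_const_lt
      (hθ.trans_le (measure_mono fun x hx => ?_))).exists
    obtain ⟨N, hN⟩ := eventually_atTop.1 (hx ε hε)
    exact Set.mem_iUnion.2 ⟨N, hN⟩
  set K := ∏ s ∈ Finset.range (Fintype.card n), (Fintype.card n ^ (s + 1) + 2) with hK
  have rate_pos : 0 < δ * (θ / (2 * (K + 1))) := by positivity
  refine (lt_prod_of_isNearlyNilpotent (n := n) rate_pos fun ε hε => ?_).ne hK
  obtain ⟨N, hN⟩ := exists_lt_measure ε hε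
  exact hL.exists_isTransitionFamily_isNearlyNilpotent hT hLm hδ.le hε.le θ_pos hN K

theorem ae_frequently_lt_of_tendsto_one (hL : IsCocycle T L) (hT : MeasurePreserving T μ μ)
    (hLm : ∀ k, StronglyMeasurable fun x => L x k) :
    ∀ᵐ x ∂μ, Tendsto (fun k => ‖L x k‖ ^ (1 / (k : ℝ))) atTop (𝓝 1) → ∀ c < 1,
      ∃ᶠ k : ℕ in atTop, c < (spectralRadius ℂ (L x k)).toReal ^ (1 / (k : ℝ)) := by
  have ae_not := ae_all_iff.2 fun j : ℕ =>
    hL.ae_not_eventually_isNearlyNilpotent hT hLm (δ := 1 / ((j : ℝ) + 1)) (by positivity)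
  filter_upwards [ae_not] with x not_nilpotent norm_tendsto c hc
  have exp_tendsto : Tendsto (fun j : ℕ => Real.exp (-(1 / ((j : ℝ) + 1)))) atTop (𝓝 1) := by
    simpa using tendsto_one_div_add_atTop_nhds_zero_nat.neg.rexp
  obtain ⟨j, c_lt⟩ := (exp_tendsto.eventually_const_lt hc).exists
  by_contra! eventually_le
  refine not_nilpotent j fun ε hε => ?_
  filter_upwards [eventually_le, eventually_norm_mem_Icc_of_tendsto norm_tendsto hε,
    eventually_ne_atTop 0] with k root_le norm_mem hk
  refine ⟨?_, norm_mem⟩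
  rw [mul_comm, Real.exp_nat_mul, ← Real.rpow_inv_natCast_pow ENNReal.toReal_nonneg hk, ← one_div]
  exact pow_le_pow_left₀ (by positivity) (root_le.trans c_lt.le) k

theorem ae_frequently_lt_of_tendsto (hL : IsCocycle T L) (hT : MeasurePreserving T μ μ)
    (hLm : ∀ k, StronglyMeasurable fun x => L x k) {l : Ω → ℝ} (hl : Measurable l)
    (hlT : l ∘ T = l) :
    ∀ᵐ x ∂μ, Tendsto (fun k => ‖L x k‖ ^ (1 / (k : ℝ))) atTop (𝓝 (l x)) → ∀ c < l x,
      ∃ᶠ k : ℕ in atTop, c < (spectralRadius ℂ (L x k)).toReal ^ (1 / (k : ℝ)) := by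
  have normalised : IsCocycle T fun x k => ((l x)⁻¹ : ℂ) ^ k • L x k :=
    hL.pow_smul (funext fun x => by rw [← congrFun hlT x]; rfl)
  filter_upwards [normalised.ae_frequently_lt_of_tendsto_one hT fun k =>
    (hl.complex_ofReal.inv.pow_const k).stronglyMeasurable.smul (hLm k)] with x hx tendsto c c_lt
  rcases lt_or_ge c 0 with c_neg | c_nonneg
  · exact .of_forall fun k => c_neg.trans_le (by positivity)
  have l_pos : 0 < l x := c_nonneg.trans_lt c_lt
  have norm_inv_rate : ‖((l x)⁻¹ : ℂ)‖ = (l x)⁻¹ := by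
    rw [norm_inv, Complex.norm_real, Real.norm_of_nonneg l_pos.le]
  have root_mul {s : ℝ} {k : ℕ} (hk : k ≠ 0) (hs : 0 ≤ s) :
      ((l x)⁻¹ ^ k * s) ^ (1 / (k : ℝ)) = (l x)⁻¹ * s ^ (1 / (k : ℝ)) := by
    rw [Real.mul_rpow (by positivity) hs, one_div, Real.pow_rpow_inv_natCast (by positivity) hk]
  have normalised_tendsto :
      Tendsto (fun k => ‖((l x)⁻¹ : ℂ) ^ k • L x k‖ ^ (1 / (k : ℝ))) atTop (𝓝 1) := by
    have mul_tendsto := tendsto.const_mul (l x)⁻¹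
    rw [inv_mul_cancel₀ l_pos.ne'] at mul_tendsto
    refine mul_tendsto.congr' ?_
    filter_upwards [eventually_ne_atTop 0] with k hk
    rw [norm_smul, norm_pow, norm_inv_rate, root_mul hk (norm_nonneg _)]
  refine ((hx normalised_tendsto _ (inv_mul_lt_one₀ l_pos |>.2 c_lt)).and_eventually
    (eventually_ne_atTop 0)).mono fun k ⟨lt, hk⟩ => ?_
  rwa [spectralRadius_smul, ENNReal.toReal_mul, toReal_enorm, norm_pow, norm_inv_rate,
    root_mul hk ENNReal.toReal_nonneg, mul_lt_mul_iff_right₀ (inv_pos.2 l_pos)] at lt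

end IsCocycle

end SpectralRadiusOfCocycles

open scoped Matrix.Norms.L2Operator in
theorem morris_general {n : Type*} [Fintype n] [DecidableEq n] [Nonempty n]
    {Ω : Type*} [MeasurableSpace Ω] {μ : Measure Ω} [IsFiniteMeasure μ] {T : Ω → Ω}
    (hT : MeasurePreserving T μ μ) {L : Ω → ℕ → Matrix n n ℂ} (hL : IsCocycle T L)
    (hLm : ∀ k, StronglyMeasurable fun x => L x k)
    (hint : ∫⁻ x, ENNReal.ofReal (Real.posLog ‖L x 1‖) ∂μ ≠ ⊤) :
    ∀ᵐ x ∂μ, Tendsto (fun k => ‖L x k‖ ^ (1 / (k : ℝ))) atTop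
      (𝓝 (limsup (fun k : ℕ => (spectralRadius ℂ (L x k)).toReal ^ (1 / (k : ℝ))) atTop)) := by
  obtain ⟨l, hl, hlT, norm_tendsto⟩ := hL.isSubmultiplicativeCocycle_norm.exists_tendsto hT
    (fun k => (hLm k).norm.measurable) hint
  filter_upwards [norm_tendsto, hL.ae_frequently_lt_of_tendsto hT hLm hl hlT] with x tendsto lt
  have root_le (k : ℕ) : (spectralRadius ℂ (L x k)).toReal ^ (1 / (k : ℝ)) ≤
      ‖L x k‖ ^ (1 / (k : ℝ)) :=
    Real.rpow_le_rpow ENNReal.toReal_nonneg (toReal_spectralRadius_le_norm _) (by positivity)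
  rwa [limsup_eq_of_le_of_frequently_lt tendsto root_le (lt tendsto)]

/-- **Morris' theorem.** For a measurable matrix cocycle over a measure-preserving
continuous map with integrable `log⁺` of the norm of the generator, almost everywhere
the limit `lim ‖L(ω,n)‖^{1/n}` exists and equals `limsup ρ(L(ω,n))^{1/n}`. -/
theorem morris {d : ℕ} (hd : 1 ≤ d)
    {Ω : Type*} [TopologicalSpace Ω] [TopologicalSpace.MetrizableSpace Ω]
    [MeasurableSpace Ω] [BorelSpace Ω]
    (μ : Measure Ω) [IsProbabilityMeasure μ]
    (T : Ω → Ω) (hT : Continuous T) (hTμ : MeasurePreserving T μ μ)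
    (L : Ω → ℕ → Matrix (Fin d) (Fin d) ℂ)
    (hmeas : ∀ (n : ℕ) (j k : Fin d), Measurable fun ω => L ω n j k)
    (hL0 : ∀ ω : Ω, L ω 0 = 1)
    (hcoc : ∀ (ω : Ω) (ℓ m : ℕ), 1 ≤ ℓ → 1 ≤ m → L ω (ℓ + m) = L (T^[m] ω) ℓ * L ω m)
    (hint : ∫⁻ ω, ENNReal.ofReal (max (Real.log (opNorm (L ω 1))) 0) ∂μ < ⊤) :
    ∀ᵐ ω ∂μ,
      Filter.Tendsto (fun n : ℕ => opNorm (L ω n) ^ (1 / (n : ℝ))) Filter.atTop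
        (nhds (Filter.limsup
          (fun n : ℕ => specRad (L ω n) ^ (1 / (n : ℝ))) Filter.atTop)) := by
  have : Nonempty (Fin d) := Fin.pos_iff_nonempty.1 hd
  exact morris_general hTμ (.of_pos hL0 hcoc)
    (fun n => stronglyMeasurable_of_matrix_entries (hmeas n))
    (by simpa only [Real.posLog, max_comm] using! hint.ne)
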